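/- arXiv:1701.07682 — 2 statements merged into one kernel-verified Lean document; each statement's English description precedes it below -/
import Mathlib

section
/- For every natural number n ≥ 1, the best Markov constants for the two Chebyshev weights satisfy 0.472135·n² ≤ c_n(0) ≤ 0.472871·(n+2)² and 0.248549·n² ≤ c_n(1) ≤ 0.250987·(n+4)². -/
open Polynomial Filter

/-- The weighted `L_2` norm with the Gegenbauer weight `w_lam(t) = (1-t^2)^(lam-1/2)`. -/
noncomputable def gegNorm (lam : ℝ) (f : ℝ → ℝ) : ℝ :=
  (∫ x in (-1:ℝ)..1, (f x) ^ 2 * (1 - x ^ 2) ^ (lam - 1/2)) ^ ((1:ℝ)/2)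

/-- The best Markov constant `c_n(lam)` in `‖p'‖ ≤ c_n(lam) ‖p‖` for polynomials of degree ≤ n. -/
noncomputable def markovConst (lam : ℝ) (n : ℕ) : ℝ :=
  sSup { r : ℝ | ∃ p : Polynomial ℝ, p ≠ 0 ∧ p.natDegree ≤ n ∧
    r = gegNorm lam (fun x => (Polynomial.derivative p).eval x) /
        gegNorm lam (fun x => p.eval x) }

/-! If `p'` has coefficients `δ j * t j` in the Chebyshev basis, then those of `p` are rescaled
differences `t k - t (k + 2)`, because each Chebyshev polynomial is a combination of derivatives of
its two neighbours. By Parseval the square of the Markov constant is thus the best constant in a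
discrete Hardy inequality `∑ ω j * t j ^ 2 ≤ C ∑ α k * (t k - t (k + 2)) ^ 2`, whose
Euler–Lagrange equation is solved by an explicit power series in the eigenvalue `μ = 1 / C`, with
central factorials of the node in its coefficients. The series alternates, so a partial sum of odd
degree is a supersolution: if it stays positive up to the end, Picone's inequality bounds `C` from
above. A partial sum of even degree is a subsolution: if it is nonpositive at the end, its positive
part is a test sequence bounding `C` from below. -/

namespace MarkovChebyshev

open Finset Polynomial.Chebyshev MeasureTheory

section CentralFactorial

variable {R : Type*} [CommRing R]

/-- The central factorial of step two, `(x + k - 1) * (x + k - 3) * ⋯ * (x - k + 1)`. It plays the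
role of the power `x ^ k` for the difference operator `f (x + 1) - f (x - 1)`. -/
def centralFactorial (x : R) : ℕ → R
  | 0 => 1
  | 1 => x
  | k + 2 => (x ^ 2 - ((k : R) + 1) ^ 2) * centralFactorial x k

lemma centralFactorial_add_one_succ (x : R) (k : ℕ) :
    centralFactorial (x + 1) (k + 1) = (x + k + 1) * centralFactorial x k := by
  induction k using Nat.twoStepInduction with
  | zero => simp [centralFactorial]
  | one =>
    norm_num [centralFactorial]
    ring
  | more k ih _ =>
    rw [centralFactorial, ih, centralFactorial]
    push_cast
    ring

lemma centralFactorial_neg (x : R) (k : ℕ) :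
    centralFactorial (-x) k = (-1) ^ k * centralFactorial x k := by
  induction k using Nat.twoStepInduction with
  | zero => simp [centralFactorial]
  | one => simp [centralFactorial]
  | more k ih _ =>
    rw [centralFactorial, ih, centralFactorial]
    ring

lemma centralFactorial_sub_one_succ (x : R) (k : ℕ) :
    centralFactorial (x - 1) (k + 1) = (x - k - 1) * centralFactorial x k := by
  have neg_one_pow_mul_self : (-1 : R) ^ k * (-1) ^ k = 1 := by rw [← mul_pow]; simp
  rw [← neg_neg (x - 1), centralFactorial_neg, neg_sub', sub_neg_eq_add,
    centralFactorial_add_one_succ, centralFactorial_neg, pow_succ]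
  linear_combination (x - k - 1) * centralFactorial x k * neg_one_pow_mul_self

lemma centralFactorial_difference (x : R) (k : ℕ) :
    centralFactorial (x + 1) (k + 1) - centralFactorial (x - 1) (k + 1) =
      2 * (k + 1) * centralFactorial x k := by
  rw [centralFactorial_add_one_succ, centralFactorial_sub_one_succ]
  ring

lemma centralFactorial_second_difference (x : R) (k : ℕ) :
    centralFactorial (x + 2) (k + 2) - 2 * centralFactorial x (k + 2) +
      centralFactorial (x - 2) (k + 2) = 4 * (k + 2) * (k + 1) * centralFactorial x k := by
  have right := centralFactorial_difference (x + 1) (k + 1)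
  have left := centralFactorial_difference (x - 1) (k + 1)
  rw [add_assoc, one_add_one_eq_two, add_sub_cancel_right, add_assoc, one_add_one_eq_two] at right
  rw [sub_add_cancel, sub_sub, one_add_one_eq_two, add_assoc, one_add_one_eq_two] at left
  push_cast at right left
  linear_combination right - left + 2 * ((k : R) + 2) * centralFactorial_difference x k

/-- The operator `(g k) ↦ (a k * g (k + 4) + b k * g (k + 2))` on sequences. Applied to the central
factorials of `x`, it inverts a difference operator with coefficient `x ^ 2` term by term. -/
@[simps] def twoTermShift (a b : ℕ → R) : Module.End R (ℕ → R) where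
  toFun g k := a k * g (k + 4) + b k * g (k + 2)
  map_add' g h := by ext k; simp only [Pi.add_apply]; ring
  map_smul' c g := by ext k; simp only [Pi.smul_apply, smul_eq_mul, RingHom.id_apply]; ring

lemma twoTermShift_pow_alternating (a b g : ℕ → R) (i k : ℕ) :
    (twoTermShift a b ^ i) (fun k => (-1) ^ k * g k) k =
      (-1) ^ k * (twoTermShift a b ^ i) g k := by
  induction i generalizing k with
  | zero => rfl
  | succ i ih =>
    simp only [pow_succ', Module.End.mul_apply, twoTermShift_apply, ih]
    ring

end CentralFactorial

section Series

/-- The antiderivative of the central factorials for the difference `f (x + 1) - f (x - 1)`. -/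
noncomputable def fluxFactorial (x : ℝ) (k : ℕ) : ℝ := centralFactorial x (k + 1) / (2 * (k + 1))

lemma fluxFactorial_difference (x : ℝ) :
    fluxFactorial (x + 1) - fluxFactorial (x - 1) = centralFactorial x := by
  ext k
  rw [Pi.sub_apply, fluxFactorial, fluxFactorial, ← sub_div, centralFactorial_difference]
  field_simp

lemma fluxFactorial_neg (x : ℝ) :
    fluxFactorial (-x) = -fun k => (-1) ^ k * fluxFactorial x k := by
  ext k
  rw [Pi.neg_apply, fluxFactorial, fluxFactorial, centralFactorial_neg]
  ring

/-- The shift for the weight `w_0`. Its coefficients come from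
`x ^ 2 * F k = F (k + 2) + (k + 1) ^ 2 * F k` for the central factorials `F` of `x`. -/
noncomputable def tShift : Module.End ℝ (ℕ → ℝ) :=
  twoTermShift (fun k => 1 / ((k + 1) * (k + 4))) (fun k => (k + 2) / (k + 1))

lemma tShift_centralFactorial_difference (x : ℝ) :
    tShift (centralFactorial (x + 1) - centralFactorial (x - 1)) =
      (4 * x ^ 2) • fluxFactorial x := by
  ext k
  simp only [tShift, twoTermShift_apply, Pi.sub_apply, Pi.smul_apply, smul_eq_mul, fluxFactorial,
    centralFactorial_difference x (k + 3), centralFactorial_difference x (k + 1)]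
  rw [centralFactorial]
  push_cast
  field_simp
  ring

/-- The coefficient of `(-μ) ^ i` in the power series solution, for the weight `w_0`, of the
Euler–Lagrange equation with eigenvalue `μ`, as a function of the node `x`. -/
noncomputable def tSeries (i : ℕ) (x : ℝ) : ℝ := (tShift ^ i) (centralFactorial x) 0

/-- The flux `(tSeries (i + 1) (x + 1) - tSeries (i + 1) (x - 1)) / (4 * x ^ 2)`, extended
to `x = 0` as a polynomial. -/
noncomputable def tFlux (i : ℕ) (x : ℝ) : ℝ := (tShift ^ i) (fluxFactorial x) 0

lemma tSeries_difference (i : ℕ) (x : ℝ) :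
    tSeries (i + 1) (x + 1) - tSeries (i + 1) (x - 1) = 4 * x ^ 2 * tFlux i x := by
  simp only [tSeries, tFlux, ← Pi.sub_apply, ← map_sub]
  rw [pow_succ, Module.End.mul_apply, tShift_centralFactorial_difference, map_smul,
    Pi.smul_apply, smul_eq_mul]

lemma tFlux_difference (i : ℕ) (x : ℝ) : tFlux i (x + 1) - tFlux i (x - 1) = tSeries i x := by
  simp only [tSeries, tFlux, ← Pi.sub_apply, ← map_sub, fluxFactorial_difference]

lemma tFlux_neg (i : ℕ) (x : ℝ) : tFlux i (-x) = -tFlux i x := by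
  rw [tFlux, fluxFactorial_neg, map_neg, Pi.neg_apply, tShift, twoTermShift_pow_alternating,
    pow_zero, one_mul, tFlux, tShift]

lemma tFlux_zero (i : ℕ) : tFlux i 0 = 0 := by
  have h := tFlux_neg i 0
  rw [neg_zero] at h
  exact self_eq_neg.1 h

/-- The shift for the weight `w_1`, with coefficients obtained as for `tShift`. -/
noncomputable def uShift : Module.End ℝ (ℕ → ℝ) :=
  twoTermShift (fun k => 1 / ((k + 3) * (k + 4))) (fun k => (k + 1) / (k + 2))

lemma uShift_centralFactorial_second_difference (x : ℝ) :
    uShift (centralFactorial (x + 2) - (2 : ℝ) • centralFactorial x + centralFactorial (x - 2)) =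
      (4 * x ^ 2) • centralFactorial x := by
  ext k
  simp only [uShift, twoTermShift_apply, Pi.add_apply, Pi.sub_apply, Pi.smul_apply, smul_eq_mul,
    centralFactorial_second_difference x k, centralFactorial_second_difference x (k + 2)]
  simp only [centralFactorial]
  push_cast
  field_simp
  ring

/-- The coefficient of `(-μ) ^ i` in the power series solution, for the weight `w_1`, of the
Euler–Lagrange equation with eigenvalue `μ`, as a function of the node `x`. -/
noncomputable def uSeries (i : ℕ) (x : ℝ) : ℝ := (uShift ^ i) (centralFactorial x) 0

lemma uSeries_second_difference (i : ℕ) (x : ℝ) :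
    uSeries (i + 1) (x + 2) - 2 * uSeries (i + 1) x + uSeries (i + 1) (x - 2) =
      4 * x ^ 2 * uSeries i x := by
  have h := congrFun (congrArg (uShift ^ i) (uShift_centralFactorial_second_difference x)) 0
  rw [← Module.End.mul_apply, ← pow_succ] at h
  simpa only [uSeries, map_add, map_sub, map_smul, Pi.add_apply, Pi.sub_apply, Pi.smul_apply,
    smul_eq_mul] using h

lemma uSeries_neg (i : ℕ) (x : ℝ) : uSeries i (-x) = uSeries i x := by
  rw [uSeries, funext (centralFactorial_neg x), uShift, twoTermShift_pow_alternating, pow_zero,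
    one_mul, uSeries, uShift]

lemma uSeries_succ_two (i : ℕ) : uSeries (i + 1) 2 = uSeries (i + 1) 0 := by
  have h := uSeries_second_difference i 0
  rw [zero_sub, uSeries_neg, zero_add] at h
  linear_combination h / 2

end Series

section DiscreteHardy

/-- The discrete Dirichlet form with step two and edge weights `α`. -/
def differenceEnergy (α : ℕ → ℝ) (n : ℕ) (t : ℕ → ℝ) : ℝ :=
  ∑ k ∈ range n, α k * (t k - t (k + 2)) ^ 2

/-- The squared `ℓ²` norm with vertex weights `ω` of the first `n` terms of a sequence. -/
def weightedSqSum (ω : ℕ → ℝ) (n : ℕ) (t : ℕ → ℝ) : ℝ :=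
  ∑ j ∈ range n, ω j * t j ^ 2

variable {n : ℕ} {α ω φ h t : ℕ → ℝ} {μ : ℝ}

-- At `j = 0` the truncated subtraction gives `h (j - 1) = h 0 = 0`, as it should.
lemma sum_sub_add_two_smul {R M : Type*} [Ring R] [AddCommGroup M] [Module R M] {B : ℕ → R}
    {h : ℕ → M} (h_zero : h 0 = 0) (hB : B n = 0) (hB' : B (n + 1) = 0) :
    ∑ k ∈ range n, (B k - B (k + 2)) • h (k + 1) =
      ∑ j ∈ range n, B j • (h (j + 1) - h (j - 1)) := by
  have shifted : ∑ k ∈ range n, B (k + 2) • h (k + 1) = ∑ j ∈ range n, B j • h (j - 1) := by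
    calc ∑ k ∈ range n, B (k + 2) • h (k + 1) = ∑ j ∈ range (n + 2), B j • h (j - 1) := by
          rw [sum_range_succ', sum_range_succ']
          simp [h_zero]
      _ = _ := by simp [sum_range_succ, hB, hB']
  simp only [sub_smul, smul_sub, sum_sub_distrib, shifted]

lemma picone_inequality {K : Type*} [Field K] [LinearOrder K] [IsStrictOrderedRing K]
    {u v : K} (hu : 0 < u) (hv : 0 < v) (a b : K) :
    (u - v) * (a ^ 2 / u - b ^ 2 / v) ≤ (a - b) ^ 2 := by
  have identity : (a - b) ^ 2 - (u - v) * (a ^ 2 / u - b ^ 2 / v) =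
      (v * a - u * b) ^ 2 / (u * v) := by
    field_simp
    ring
  rw [← sub_nonneg, identity]
  positivity

theorem mul_weightedSqSum_le_of_supersolution (h_zero : h 0 = 0)
    (h_succ : ∀ k, h (k + 1) = α k * (φ k - φ (k + 2))) (hα : ∀ k, 0 ≤ α k)
    (hφ : ∀ j < n + 2, 0 < φ j)
    (hsuper : ∀ j < n, μ * ω j * φ j ≤ h (j + 1) - h (j - 1))
    (ht : t n = 0) (ht' : t (n + 1) = 0) :
    μ * weightedSqSum ω n t ≤ differenceEnergy α n t := by
  calc μ * weightedSqSum ω n t = ∑ j ∈ range n, t j ^ 2 / φ j * (μ * ω j * φ j) := by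
        rw [weightedSqSum, mul_sum]
        refine sum_congr rfl fun j hj => ?_
        have := hφ j ((mem_range.1 hj).trans (by omega))
        field_simp
    _ ≤ ∑ j ∈ range n, t j ^ 2 / φ j * (h (j + 1) - h (j - 1)) := by
        refine sum_le_sum fun j hj => mul_le_mul_of_nonneg_left (hsuper j (mem_range.1 hj)) ?_
        have := hφ j ((mem_range.1 hj).trans (by omega))
        positivity
    _ = ∑ k ∈ range n, (t k ^ 2 / φ k - t (k + 2) ^ 2 / φ (k + 2)) * h (k + 1) :=
        (sum_sub_add_two_smul (B := fun j => t j ^ 2 / φ j) h_zero (by simp [ht])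
          (by simp [ht'])).symm
    _ ≤ differenceEnergy α n t := by
        refine sum_le_sum fun k hk => ?_
        have hk := mem_range.1 hk
        rw [h_succ, mul_left_comm, mul_comm (_ - _)]
        exact mul_le_mul_of_nonneg_left
          (picone_inequality (hφ k (by omega)) (hφ (k + 2) (by omega)) _ _) (hα k)

lemma sq_max_sub_max_le {R : Type*} [CommRing R] [LinearOrder R] [IsStrictOrderedRing R]
    (a b : R) :
    (max a 0 - max b 0) ^ 2 ≤ (max a 0 - max b 0) * (a - b) := by
  rcases le_total a 0 with ha | ha <;> rcases le_total b 0 with hb | hb <;>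
    simp only [ha, hb, max_eq_left, max_eq_right] <;> nlinarith

lemma max_zero_mul_self {R : Type*} [Semiring R] [LinearOrder R] (a : R) :
    max a 0 * a = max a 0 ^ 2 := by
  rcases le_total a 0 with ha | ha
  · simp [ha]
  · rw [max_eq_left ha, sq]

/-- The positive part of `φ` on the indices whose parity is opposite to that of `n`. The step-two
Dirichlet form does not see the other parity class. -/
noncomputable def oppositeParityPosPart (φ : ℕ → ℝ) (n j : ℕ) : ℝ :=
  if Odd (j + n) then max (φ j) 0 else 0

lemma oppositeParityPosPart_nonneg (φ : ℕ → ℝ) (n j : ℕ) : 0 ≤ oppositeParityPosPart φ n j := by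
  rw [oppositeParityPosPart]
  split_ifs <;> simp

lemma oppositeParityPosPart_mul_self (φ : ℕ → ℝ) (n j : ℕ) :
    oppositeParityPosPart φ n j * φ j = oppositeParityPosPart φ n j ^ 2 := by
  rw [oppositeParityPosPart]
  split_ifs
  · exact max_zero_mul_self _
  · simp

lemma oppositeParityPosPart_sq_sub_le (φ : ℕ → ℝ) (n k : ℕ) :
    (oppositeParityPosPart φ n k - oppositeParityPosPart φ n (k + 2)) ^ 2 ≤
      (oppositeParityPosPart φ n k - oppositeParityPosPart φ n (k + 2)) * (φ k - φ (k + 2)) := by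
  have parity : Odd (k + 2 + n) ↔ Odd (k + n) := by grind
  simp only [oppositeParityPosPart, parity]
  split_ifs
  · exact sq_max_sub_max_le _ _
  · simp

lemma oppositeParityPosPart_self (φ : ℕ → ℝ) (n : ℕ) : oppositeParityPosPart φ n n = 0 :=
  if_neg (by simp)

lemma oppositeParityPosPart_succ_self (hφ : φ (n + 1) ≤ 0) :
    oppositeParityPosPart φ n (n + 1) = 0 := by
  simp [oppositeParityPosPart, hφ]

lemma weightedSqSum_oppositeParityPosPart_pos (hn : n ≠ 0) (hω : ∀ j, 0 < ω j) (hφ₀ : 0 < φ 0)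
    (hφ₁ : 0 < φ 1) : 0 < weightedSqSum ω n (oppositeParityPosPart φ n) := by
  obtain ⟨j, hjn, hjpos⟩ : ∃ j < n, 0 < oppositeParityPosPart φ n j := by
    rcases Nat.even_or_odd n with he | ho
    · exact ⟨1, by grind, by simp [oppositeParityPosPart, hφ₁, he.one_add]⟩
    · exact ⟨0, by omega, by simp [oppositeParityPosPart, hφ₀, ho]⟩
  refine sum_pos' (fun j _ => mul_nonneg (hω j).le (sq_nonneg _)) ⟨j, mem_range.2 hjn, ?_⟩
  exact mul_pos (hω j) (pow_pos hjpos 2)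

theorem differenceEnergy_le_of_subsolution (h_zero : h 0 = 0)
    (h_succ : ∀ k, h (k + 1) = α k * (φ k - φ (k + 2))) (hα : ∀ k, 0 ≤ α k)
    (hφ : φ (n + 1) ≤ 0) (hsub : ∀ j < n, h (j + 1) - h (j - 1) ≤ μ * ω j * φ j) :
    differenceEnergy α n (oppositeParityPosPart φ n) ≤
      μ * weightedSqSum ω n (oppositeParityPosPart φ n) := by
  set t := oppositeParityPosPart φ n
  calc differenceEnergy α n t ≤ ∑ k ∈ range n, (t k - t (k + 2)) * h (k + 1) := by
        refine sum_le_sum fun k _ => ?_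
        rw [h_succ, mul_left_comm]
        exact mul_le_mul_of_nonneg_left (oppositeParityPosPart_sq_sub_le φ n k) (hα k)
    _ = ∑ j ∈ range n, t j * (h (j + 1) - h (j - 1)) :=
        sum_sub_add_two_smul h_zero (oppositeParityPosPart_self φ n)
          (oppositeParityPosPart_succ_self hφ)
    _ ≤ ∑ j ∈ range n, t j * (μ * ω j * φ j) :=
        sum_le_sum fun j hj => mul_le_mul_of_nonneg_left (hsub j (mem_range.1 hj))
          (oppositeParityPosPart_nonneg φ n j)
    _ = μ * weightedSqSum ω n t := by
        rw [weightedSqSum, mul_sum]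
        refine sum_congr rfl fun j _ => ?_
        linear_combination μ * ω j * oppositeParityPosPart_mul_self φ n j

end DiscreteHardy

section SeriesSolutions

variable {n N : ℕ} {α ω : ℕ → ℝ} {s f : ℕ → ℕ → ℝ} {μ : ℝ}

/-- A formal power series solution `∑ i, (-μ) ^ i * s i j`, with fluxes `f`, of the Euler–Lagrange
equation with eigenvalue `μ` of the quotient `differenceEnergy α / weightedSqSum ω`. The truncated
subtraction in `f_sub` encodes the boundary condition at `j = 0`. -/
structure IsSeriesSolution (α ω : ℕ → ℝ) (s f : ℕ → ℕ → ℝ) : Prop where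
  s_zero : ∀ j, s 0 j = 1
  f_zero : ∀ i, f i 0 = 0
  f_succ : ∀ i k, f i (k + 1) = α k * (s (i + 1) (k + 2) - s (i + 1) k)
  f_sub : ∀ i j, f i (j + 1) - f i (j - 1) = ω j * s i j

/-- The partial sum of degree `N` in `μ` of the series `∑ i, (-μ) ^ i * s i j`. -/
def truncatedSeries (μ : ℝ) (s : ℕ → ℕ → ℝ) (N j : ℕ) : ℝ :=
  ∑ i ∈ range (N + 1), (-μ) ^ i * s i j

/-- The flux of `truncatedSeries μ s N`, when `f` is the flux of `s`. -/
def truncatedFlux (μ : ℝ) (f : ℕ → ℕ → ℝ) (N k : ℕ) : ℝ :=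
  μ * ∑ i ∈ range N, (-μ) ^ i * f i k

lemma truncatedSeries_inv {y : ℝ} (hy : y ≠ 0) (s : ℕ → ℕ → ℝ) (N j : ℕ) :
    truncatedSeries y⁻¹ s N j =
      (∑ i ∈ range (N + 1), (-1) ^ i * y ^ (N - i) * s i j) / y ^ N := by
  rw [truncatedSeries, sum_div]
  refine sum_congr rfl fun i hi => ?_
  rw [neg_pow, inv_pow, ← Nat.sub_add_cancel (mem_range_succ_iff.1 hi), pow_add,
    Nat.add_sub_cancel]
  field_simp

namespace IsSeriesSolution

lemma truncatedFlux_zero (hs : IsSeriesSolution α ω s f) (μ : ℝ) (N : ℕ) :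
    truncatedFlux μ f N 0 = 0 := by
  simp [truncatedFlux, hs.f_zero]

lemma truncatedFlux_succ (hs : IsSeriesSolution α ω s f) (μ : ℝ) (N k : ℕ) :
    truncatedFlux μ f N (k + 1) =
      α k * (truncatedSeries μ s N k - truncatedSeries μ s N (k + 2)) := by
  simp only [truncatedFlux, truncatedSeries, sum_range_succ' _ N, hs.s_zero,
    add_sub_add_right_eq_sub, ← sum_sub_distrib, mul_sum, hs.f_succ]
  exact sum_congr rfl fun i _ => by ring

lemma truncatedFlux_sub (hs : IsSeriesSolution α ω s f) (μ : ℝ) (N j : ℕ) :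
    truncatedFlux μ f N (j + 1) - truncatedFlux μ f N (j - 1) =
      μ * ω j * (truncatedSeries μ s N j - (-μ) ^ N * s N j) := by
  simp only [truncatedFlux, truncatedSeries, sum_range_succ _ N, add_sub_cancel_right, ← mul_sub,
    ← sum_sub_distrib, hs.f_sub, mul_sum]
  exact sum_congr rfl fun i _ => by ring

lemma f_nonneg (hs : IsSeriesSolution α ω s f) (hω : ∀ j, 0 ≤ ω j) {i : ℕ}
    (hi : ∀ j, 0 ≤ s i j) (k : ℕ) : 0 ≤ f i k := by
  have difference_nonneg (j : ℕ) : 0 ≤ f i (j + 1) - f i (j - 1) :=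
    (mul_nonneg (hω j) (hi j)).trans_eq (hs.f_sub i j).symm
  induction k using Nat.twoStepInduction with
  | zero => exact (hs.f_zero i).ge
  | one => simpa [hs.f_zero] using difference_nonneg 0
  | more k ih _ => exact ih.trans (sub_nonneg.1 (difference_nonneg (k + 1)))

lemma s_nonneg (hs : IsSeriesSolution α ω s f) (hα : ∀ k, 0 < α k) (hω : ∀ j, 0 ≤ ω j)
    (hs₀ : ∀ i ≤ N, 0 ≤ s i 0) (hs₁ : ∀ i ≤ N, 0 ≤ s i 1) (j : ℕ) : 0 ≤ s N j := by
  induction N generalizing j with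
  | zero => exact (hs.s_zero j).symm ▸ zero_le_one
  | succ N ih =>
    have flux_nonneg := hs.f_nonneg hω
      (ih (fun i hi => hs₀ i (by omega)) (fun i hi => hs₁ i (by omega)))
    induction j using Nat.twoStepInduction with
    | zero => exact hs₀ _ le_rfl
    | one => exact hs₁ _ le_rfl
    | more k ihk _ =>
      have increment_nonneg : 0 ≤ s (N + 1) (k + 2) - s (N + 1) k :=
        nonneg_of_mul_nonneg_right (hs.f_succ N k ▸ flux_nonneg (k + 1)) (hα k)
      linarith

theorem mul_weightedSqSum_le (hs : IsSeriesSolution α ω s f) (hα : ∀ k, 0 ≤ α k)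
    (hω : ∀ j, 0 ≤ ω j) (hμ : 0 ≤ μ) (hN : Odd N) (hsN : ∀ j, 0 ≤ s N j)
    (hpos : ∀ j < n + 2, 0 < truncatedSeries μ s N j) {t : ℕ → ℝ} (ht : t n = 0)
    (ht' : t (n + 1) = 0) :
    μ * weightedSqSum ω n t ≤ differenceEnergy α n t := by
  refine mul_weightedSqSum_le_of_supersolution (hs.truncatedFlux_zero μ N)
    (hs.truncatedFlux_succ μ N) hα hpos (fun j _ => ?_) ht ht'
  rw [hs.truncatedFlux_sub, hN.neg_pow, neg_mul, sub_neg_eq_add]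
  have := hω j
  have := hsN j
  gcongr
  exact le_add_of_nonneg_right (by positivity)

theorem differenceEnergy_le (hs : IsSeriesSolution α ω s f) (hα : ∀ k, 0 ≤ α k)
    (hω : ∀ j, 0 ≤ ω j) (hμ : 0 ≤ μ) (hN : Even N) (hsN : ∀ j, 0 ≤ s N j)
    (hend : truncatedSeries μ s N (n + 1) ≤ 0) :
    differenceEnergy α n (oppositeParityPosPart (truncatedSeries μ s N) n) ≤
      μ * weightedSqSum ω n (oppositeParityPosPart (truncatedSeries μ s N) n) := by
  refine differenceEnergy_le_of_subsolution (hs.truncatedFlux_zero μ N)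
    (hs.truncatedFlux_succ μ N) hα hend fun j _ => ?_
  rw [hs.truncatedFlux_sub, hN.neg_pow]
  have := hω j
  have := hsN j
  gcongr
  exact sub_le_self _ (by positivity)

end IsSeriesSolution

end SeriesSolutions

section MarkovInequality

/-- The squared Gegenbauer norm of a polynomial. -/
noncomputable def normSq (lam : ℝ) (p : ℝ[X]) : ℝ :=
  ∫ x in (-1 : ℝ)..1, (p.eval x) ^ 2 * (1 - x ^ 2) ^ (lam - 1 / 2)

/-- The Markov inequality with constant `C`, which unlike a bound on the supremum `markovConst`
is not vacuous when the quotients are unbounded. -/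
def MarkovInequality (lam : ℝ) (n : ℕ) (C : ℝ) : Prop :=
  ∀ p : ℝ[X], p.natDegree ≤ n → normSq lam (derivative p) ≤ C ^ 2 * normSq lam p

variable {lam C c : ℝ} {n : ℕ} {p : ℝ[X]}

lemma gegNorm_eval (lam : ℝ) (p : ℝ[X]) :
    gegNorm lam (fun x => p.eval x) = √(normSq lam p) :=
  (Real.sqrt_eq_rpow _).symm

lemma sqrt_sq_mul {a : ℝ} (ha : 0 ≤ a) (b : ℝ) : √(a ^ 2 * b) = a * √b := by
  rw [Real.sqrt_mul (sq_nonneg a), Real.sqrt_sq ha]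

lemma MarkovInequality.gegNorm_div_le (h : MarkovInequality lam n C) (hC : 0 ≤ C)
    (hp : p.natDegree ≤ n) :
    gegNorm lam (fun x => (derivative p).eval x) / gegNorm lam (fun x => p.eval x) ≤ C := by
  rw [gegNorm_eval, gegNorm_eval]
  refine div_le_of_le_mul₀ (Real.sqrt_nonneg _) hC ?_
  rw [← sqrt_sq_mul hC]
  exact Real.sqrt_le_sqrt (h p hp)

theorem MarkovInequality.markovConst_le (h : MarkovInequality lam n C) (hC : 0 ≤ C) :
    markovConst lam n ≤ C := by
  refine Real.sSup_le ?_ hC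
  rintro r ⟨p, -, hp, rfl⟩
  exact h.gegNorm_div_le hC hp

theorem MarkovInequality.le_markovConst (h : MarkovInequality lam n C) (hC : 0 ≤ C) (hc : 0 ≤ c)
    (hp : p.natDegree ≤ n) (hpos : 0 < normSq lam (derivative p))
    (hcp : c ^ 2 * normSq lam p ≤ normSq lam (derivative p)) :
    c ≤ markovConst lam n := by
  have hp_ne : p ≠ 0 := by
    rintro rfl
    simp [normSq] at hpos
  have normSq_pos : 0 < normSq lam p :=
    pos_of_mul_pos_right (hpos.trans_le (h p hp)) (sq_nonneg C)
  have bounded : BddAbove { r : ℝ | ∃ p : ℝ[X], p ≠ 0 ∧ p.natDegree ≤ n ∧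
      r = gegNorm lam (fun x => (derivative p).eval x) / gegNorm lam (fun x => p.eval x) } := by
    refine ⟨C, ?_⟩
    rintro r ⟨q, -, hq, rfl⟩
    exact h.gegNorm_div_le hC hq
  refine le_trans ?_ (le_csSup bounded ⟨p, hp_ne, hp, rfl⟩)
  rw [gegNorm_eval, gegNorm_eval, le_div_iff₀ (Real.sqrt_pos.2 normSq_pos), ← sqrt_sq_mul hc]
  exact Real.sqrt_le_sqrt hcp

end MarkovInequality

section Parseval

/-- Integration of polynomials against Mathlib's `measureT`, the measure `dx / √(1 - x ^ 2)`
on `(-1, 1)`, as a linear functional. -/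
noncomputable def integralT : ℝ[X] →ₗ[ℝ] ℝ where
  toFun p := ∫ x, p.eval x ∂measureT
  map_add' p q := by
    simp only [eval_add]
    exact integral_add (integrable_measureT (by fun_prop)) (integrable_measureT (by fun_prop))
  map_smul' c p := by
    simp only [eval_smul, smul_eq_mul, RingHom.id_apply]
    exact integral_const_mul _ _

lemma normSq_natCast (d : ℕ) (p : ℝ[X]) :
    normSq d p = integralT (p ^ 2 * (1 - X ^ 2) ^ d) := by
  change _ = ∫ x, (p ^ 2 * (1 - X ^ 2) ^ d).eval x ∂measureT
  rw [integral_measureT, normSq, intervalIntegral.integral_of_le (by norm_num),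
    intervalIntegral.integral_of_le (by norm_num), integral_Ioc_eq_integral_Ioo,
    integral_Ioc_eq_integral_Ioo]
  refine setIntegral_congr_fun measurableSet_Ioo fun x hx => ?_
  have weight_pos : 0 < 1 - x ^ 2 := by nlinarith [hx.1, hx.2]
  have weight_eq : (1 - x ^ 2) ^ ((d : ℝ) - 1 / 2) = (1 - x ^ 2) ^ d * √(1 - x ^ 2)⁻¹ := by
    rw [Real.rpow_sub weight_pos, Real.rpow_natCast, ← Real.sqrt_eq_rpow, Real.sqrt_inv,
      div_eq_mul_inv]
  simp only [eval_mul, eval_pow, eval_sub, eval_one, eval_X, weight_eq, mul_assoc]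

lemma integralT_T (n : ℤ) : integralT (T ℝ n) = if n = 0 then Real.pi else 0 := by
  split_ifs with h
  · subst h
    exact integral_eval_T_real_measureT_zero
  · exact integral_eval_T_real_measureT_of_ne_zero h

lemma integralT_T_mul_T (i j : ℕ) :
    integralT (T ℝ i * T ℝ j) = if i = j then (if i = 0 then Real.pi else Real.pi / 2) else 0 := by
  simp only [integralT, LinearMap.coe_mk, AddHom.coe_mk, eval_mul]
  split_ifs with hij hi
  · subst hij hi
    simpa using integral_eval_T_real_mul_self_measureT_zero
  · subst hij
    simpa using integral_T_real_mul_self_measureT_of_ne_zero hi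
  · exact integral_eval_T_real_mul_eval_T_real_measureT_of_ne (by omega)

lemma two_mul_U_mul_U_mul_one_sub_X_sq (m n : ℤ) :
    2 * (U ℝ m * U ℝ n * (1 - X ^ 2)) = T ℝ (m - n) - T ℝ (m + n + 2) := by
  refine Polynomial.eq_of_infinite_eval_eq _ _ ((Set.Icc_infinite (a := (-1 : ℝ)) (b := 1)
    (by norm_num)).mono fun x hx => ?_)
  obtain ⟨θ, rfl⟩ : ∃ θ, Real.cos θ = x := ⟨_, Real.cos_arccos hx.1 hx.2⟩
  simp only [Set.mem_ofPred_eq, eval_mul, eval_sub, eval_pow, eval_X, eval_one, eval_ofNat,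
    T_real_cos, Int.cast_sub, Int.cast_add, Int.cast_ofNat]
  rw [← Real.sin_sq,
    show ((m : ℝ) - n) * θ = (m + 1) * θ - (n + 1) * θ by ring,
    show ((m : ℝ) + n + 2) * θ = (m + 1) * θ + (n + 1) * θ by ring,
    Real.cos_sub, Real.cos_add, ← U_real_cos θ m, ← U_real_cos θ n]
  ring

lemma integralT_U_mul_U (i j : ℕ) :
    integralT (U ℝ i * U ℝ j * (1 - X ^ 2)) = if i = j then Real.pi / 2 else 0 := by
  have h := congrArg integralT (two_mul_U_mul_U_mul_one_sub_X_sq i j)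
  rw [← C_ofNat, ← smul_eq_C_mul, map_smul, map_sub, integralT_T, integralT_T,
    if_neg (by omega : (i : ℤ) + j + 2 ≠ 0), smul_eq_mul, sub_zero] at h
  simp only [sub_eq_zero, Nat.cast_inj] at h
  split_ifs at h ⊢ <;> linarith

lemma integralT_sum_sq {S : ℕ → ℝ[X]} {W : ℝ[X]} {g : ℕ → ℝ}
    (hS : ∀ i j, integralT (S i * S j * W) = if i = j then g i else 0) (s : Finset ℕ)
    (c : ℕ → ℝ) :
    integralT ((∑ i ∈ s, c i • S i) ^ 2 * W) = ∑ i ∈ s, g i * c i ^ 2 := by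
  have orthogonal (i j : ℕ) :
      integralT (c i • S i * c j • S j * W) = if i = j then g i * c i ^ 2 else 0 := by
    rw [smul_mul_smul_comm, smul_mul_assoc, map_smul, hS]
    split_ifs with h
    · subst h
      simp only [smul_eq_mul]
      ring
    · simp
  rw [sq, sum_mul_sum, sum_mul, map_sum]
  refine sum_congr rfl fun i hi => ?_
  simp only [sum_mul, map_sum, orthogonal, sum_ite_eq, hi, if_true]

lemma normSq_zero_sum_T (s : Finset ℕ) (c : ℕ → ℝ) :
    normSq 0 (∑ i ∈ s, c i • T ℝ i) =
      ∑ i ∈ s, (if i = 0 then Real.pi else Real.pi / 2) * c i ^ 2 := by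
  rw [← Nat.cast_zero, normSq_natCast, pow_zero]
  exact integralT_sum_sq (fun i j => by rw [mul_one, integralT_T_mul_T]) s c

lemma normSq_one_sum_U (s : Finset ℕ) (c : ℕ → ℝ) :
    normSq 1 (∑ i ∈ s, c i • U ℝ i) = ∑ i ∈ s, Real.pi / 2 * c i ^ 2 := by
  rw [← Nat.cast_one, normSq_natCast, pow_one]
  exact integralT_sum_sq integralT_U_mul_U s c

end Parseval

section MarkovFamily

/-- Polynomials `poly j` of degree `j`, orthogonal for the weight `w_lam` with squared norms
`κ * γ j`, such that `δ j • poly j` is a difference of derivatives of rescaled `poly (j + 1)`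
and `poly (j - 1)`. In `derivative_recurrence` the value of `β (j - 2)` is irrelevant for `j < 2`,
because `poly (j - 1) = poly 0 = 1` has zero derivative. -/
structure MarkovFamily (lam : ℝ) where
  poly : Sequence ℝ
  κ : ℝ
  γ : ℕ → ℝ
  β : ℕ → ℝ
  δ : ℕ → ℝ
  κ_pos : 0 < κ
  γ_pos : ∀ i, 0 < γ i
  β_pos : ∀ k, 0 < β k
  δ_pos : ∀ j, 0 < δ j
  poly_zero : poly 0 = 1
  normSq_sum : ∀ (s : Finset ℕ) (c : ℕ → ℝ),
    normSq lam (∑ i ∈ s, c i • poly i) = κ * ∑ i ∈ s, γ i * c i ^ 2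
  derivative_recurrence : ∀ j, derivative (β j • poly (j + 1)) -
    derivative (β (j - 2) • poly (j - 1)) = δ j • poly j

namespace MarkovFamily

variable {lam : ℝ} (F : MarkovFamily lam) {n : ℕ}

/-- The edge weights of the discrete Dirichlet form representing `normSq lam p`. -/
def edgeWeight (k : ℕ) : ℝ := F.γ (k + 1) * F.β k ^ 2

/-- The vertex weights of the discrete `ℓ²` norm representing `normSq lam (derivative p)`. -/
def vertexWeight (j : ℕ) : ℝ := F.γ j * F.δ j ^ 2

lemma edgeWeight_pos (k : ℕ) : 0 < F.edgeWeight k :=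
  mul_pos (F.γ_pos _) (pow_pos (F.β_pos k) 2)

lemma vertexWeight_pos (j : ℕ) : 0 < F.vertexWeight j :=
  mul_pos (F.γ_pos j) (pow_pos (F.δ_pos j) 2)

/-- The polynomial with derivative `∑ j < n, (F.δ j * t j) • F.poly j` and without constant
component. -/
noncomputable def differencePoly (n : ℕ) (t : ℕ → ℝ) : ℝ[X] :=
  ∑ k ∈ range n, (F.β k * (t k - t (k + 2))) • F.poly (k + 1)

lemma natDegree_differencePoly_le (n : ℕ) (t : ℕ → ℝ) :
    (F.differencePoly n t).natDegree ≤ n := by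
  refine natDegree_sum_le_of_forall_le _ _ fun k hk => (natDegree_smul_le _ _).trans ?_
  rw [F.poly.natDegree_eq]
  exact mem_range.1 hk

lemma derivative_differencePoly {t : ℕ → ℝ} (ht : t n = 0) (ht' : t (n + 1) = 0) :
    derivative (F.differencePoly n t) = ∑ j ∈ range n, (F.δ j * t j) • F.poly j := by
  let h (i : ℕ) : ℝ[X] := derivative (F.β (i - 1) • F.poly i)
  calc derivative (F.differencePoly n t) = ∑ k ∈ range n, (t k - t (k + 2)) • h (k + 1) := by
        rw [differencePoly, derivative_sum]
        refine sum_congr rfl fun k _ => ?_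
        simp only [h, derivative_smul, smul_smul, mul_comm, Nat.add_sub_cancel]
    _ = ∑ j ∈ range n, t j • (h (j + 1) - h (j - 1)) :=
        sum_sub_add_two_smul (by simp [h, F.poly_zero]) ht ht'
    _ = ∑ j ∈ range n, (F.δ j * t j) • F.poly j := by
        refine sum_congr rfl fun j _ => ?_
        rw [mul_comm, mul_smul, ← F.derivative_recurrence j]
        rfl

lemma normSq_derivative_differencePoly {t : ℕ → ℝ} (ht : t n = 0) (ht' : t (n + 1) = 0) :
    normSq lam (derivative (F.differencePoly n t)) = F.κ * weightedSqSum F.vertexWeight n t := by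
  rw [F.derivative_differencePoly ht ht', F.normSq_sum, weightedSqSum]
  simp only [vertexWeight, mul_pow, mul_assoc]

lemma normSq_differencePoly_add_C (n : ℕ) (t : ℕ → ℝ) (a : ℝ) :
    normSq lam (F.differencePoly n t + C a) =
      F.κ * (differenceEnergy F.edgeWeight n t + F.γ 0 * a ^ 2) := by
  let c : ℕ → ℝ
    | 0 => a
    | k + 1 => F.β k * (t k - t (k + 2))
  have h := F.normSq_sum (range (n + 1)) c
  simp only [c, sum_range_succ', F.poly_zero, ← Algebra.algebraMap_eq_smul_one, algebraMap_eq] at h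
  rw [differencePoly, h, differenceEnergy]
  simp only [edgeWeight, mul_pow, mul_assoc]

lemma normSq_differencePoly (n : ℕ) (t : ℕ → ℝ) :
    normSq lam (F.differencePoly n t) = F.κ * differenceEnergy F.edgeWeight n t := by
  simpa using F.normSq_differencePoly_add_C n t 0

end MarkovFamily

lemma exists_eq_sum_smul_of_degree_lt (S : Sequence ℝ) {n : ℕ} {p : ℝ[X]} (hp : p.degree < n) :
    ∃ c : ℕ → ℝ, p = ∑ i ∈ range n, c i • S i := by
  have hmem : p ∈ degreeLT ℝ n := mem_degreeLT.2 hp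
  rw [← S.span_degreeLT (fun i _ => (leadingCoeff_ne_zero.2 (S.ne_zero i)).isUnit),
    ← coe_range, Submodule.mem_span_image_finset_iff_exists_fun'] at hmem
  obtain ⟨c, hc⟩ := hmem
  exact ⟨c, hc.symm⟩

lemma degree_derivative_lt_of_natDegree_le {R : Type*} [Semiring R] {n : ℕ} {p : R[X]}
    (hp : p.natDegree ≤ n) : (derivative p).degree < n := by
  by_cases h : p = 0
  · simp [h, bot_lt_iff_ne_bot]
  · exact (degree_derivative_lt h).trans_le (degree_le_of_natDegree_le hp)

namespace MarkovFamily

variable {lam : ℝ} (F : MarkovFamily lam) {n : ℕ}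

lemma exists_eq_differencePoly_add_C {p : ℝ[X]} (hp : p.natDegree ≤ n) :
    ∃ (t : ℕ → ℝ) (a : ℝ), t n = 0 ∧ t (n + 1) = 0 ∧ p = F.differencePoly n t + C a := by
  obtain ⟨c, hc⟩ := exists_eq_sum_smul_of_degree_lt F.poly (degree_derivative_lt_of_natDegree_le hp)
  let t (j : ℕ) : ℝ := if j < n then c j / F.δ j else 0
  have ht : t n = 0 := by simp [t]
  have ht' : t (n + 1) = 0 := by simp [t]
  have same_derivative : derivative p = derivative (F.differencePoly n t) := by
    rw [hc, F.derivative_differencePoly ht ht']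
    refine sum_congr rfl fun j hj => ?_
    rw [show t j = c j / F.δ j from if_pos (mem_range.1 hj), mul_div_cancel₀ _ (F.δ_pos j).ne']
  have constant_difference : (p - F.differencePoly n t).natDegree = 0 := by
    rw [← derivative_eq_zero, derivative_sub, sub_eq_zero, same_derivative]
  exact ⟨t, _, ht, ht', sub_eq_iff_eq_add'.1 (eq_C_of_natDegree_eq_zero constant_difference)⟩

theorem markovInequality {K : ℝ}
    (h : ∀ t : ℕ → ℝ, t n = 0 → t (n + 1) = 0 →
      weightedSqSum F.vertexWeight n t ≤ K ^ 2 * differenceEnergy F.edgeWeight n t) :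
    MarkovInequality lam n K := by
  intro p hp
  obtain ⟨t, a, ht, ht', rfl⟩ := F.exists_eq_differencePoly_add_C hp
  have := F.κ_pos
  have := F.γ_pos 0
  calc normSq lam (derivative (F.differencePoly n t + C a))
      = F.κ * weightedSqSum F.vertexWeight n t := by
        rw [derivative_add, derivative_C, add_zero, F.normSq_derivative_differencePoly ht ht']
    _ ≤ F.κ * (K ^ 2 * (differenceEnergy F.edgeWeight n t + F.γ 0 * a ^ 2)) := by
        gcongr
        exact (h t ht ht').trans (by gcongr; exact le_add_of_nonneg_right (by positivity))
    _ = K ^ 2 * normSq lam (F.differencePoly n t + C a) := by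
        rw [F.normSq_differencePoly_add_C]
        ring

theorem le_markovConst {K c : ℝ} (hK : MarkovInequality lam n K) (hK₀ : 0 ≤ K) (hc : 0 ≤ c)
    {t : ℕ → ℝ} (ht : t n = 0) (ht' : t (n + 1) = 0) (hpos : 0 < weightedSqSum F.vertexWeight n t)
    (h : c ^ 2 * differenceEnergy F.edgeWeight n t ≤ weightedSqSum F.vertexWeight n t) :
    c ≤ markovConst lam n := by
  have norm_derivative := F.normSq_derivative_differencePoly ht ht'
  refine hK.le_markovConst hK₀ hc (F.natDegree_differencePoly_le n t) ?_ ?_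
  · rw [norm_derivative]
    exact mul_pos F.κ_pos hpos
  · rw [norm_derivative, F.normSq_differencePoly, mul_left_comm]
    exact mul_le_mul_of_nonneg_left h F.κ_pos.le

theorem le_markovConst_of_vertexWeight_zero {K c : ℝ} (hK : MarkovInequality lam n K)
    (hK₀ : 0 ≤ K) (hc : 0 ≤ c) (hn : n ≠ 0) (h : c ^ 2 * F.edgeWeight 0 ≤ F.vertexWeight 0) :
    c ≤ markovConst lam n := by
  have weightedSqSum_single :
      weightedSqSum F.vertexWeight n (Pi.single 0 1) = F.vertexWeight 0 := by
    simp [weightedSqSum, Pi.single_apply, hn]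
  have differenceEnergy_single :
      differenceEnergy F.edgeWeight n (Pi.single 0 1) = F.edgeWeight 0 := by
    simp [differenceEnergy, Pi.single_apply, hn]
  refine F.le_markovConst hK hK₀ hc (t := Pi.single 0 1) (by simp [hn]) (by simp) ?_ ?_
  · rw [weightedSqSum_single]
    exact F.vertexWeight_pos 0
  · rwa [weightedSqSum_single, differenceEnergy_single]

variable {s f : ℕ → ℕ → ℝ} {N : ℕ} {K c : ℝ}

theorem markovInequality_of_isSeriesSolution
    (hs : IsSeriesSolution F.edgeWeight F.vertexWeight s f) (hN : Odd N)
    (hs₀ : ∀ i ≤ N, 0 ≤ s i 0) (hs₁ : ∀ i ≤ N, 0 ≤ s i 1) (hK : K ≠ 0)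
    (hpos : ∀ j < n + 2, 0 < truncatedSeries (K ^ 2)⁻¹ s N j) :
    MarkovInequality lam n K := by
  refine F.markovInequality fun t ht ht' => ?_
  have hω (j : ℕ) : 0 ≤ F.vertexWeight j := (F.vertexWeight_pos j).le
  rw [← inv_mul_le_iff₀ (by positivity)]
  exact hs.mul_weightedSqSum_le (fun k => (F.edgeWeight_pos k).le) hω (by positivity) hN
    (hs.s_nonneg F.edgeWeight_pos hω hs₀ hs₁) hpos ht ht'

theorem le_markovConst_of_isSeriesSolution
    (hs : IsSeriesSolution F.edgeWeight F.vertexWeight s f) (hN : Even N)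
    (hs₀ : ∀ i ≤ N, 0 ≤ s i 0) (hs₁ : ∀ i ≤ N, 0 ≤ s i 1) (hK : MarkovInequality lam n K)
    (hK₀ : 0 ≤ K) (hc : 0 < c) (hn : n ≠ 0)
    (hpos₀ : 0 < truncatedSeries (c ^ 2)⁻¹ s N 0) (hpos₁ : 0 < truncatedSeries (c ^ 2)⁻¹ s N 1)
    (hend : truncatedSeries (c ^ 2)⁻¹ s N (n + 1) ≤ 0) :
    c ≤ markovConst lam n := by
  have hω (j : ℕ) : 0 ≤ F.vertexWeight j := (F.vertexWeight_pos j).le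
  refine F.le_markovConst hK hK₀ hc.le (oppositeParityPosPart_self _ n)
    (oppositeParityPosPart_succ_self hend)
    (weightedSqSum_oppositeParityPosPart_pos hn F.vertexWeight_pos hpos₀ hpos₁) ?_
  rw [← le_inv_mul_iff₀ (by positivity)]
  exact hs.differenceEnergy_le (fun k => (F.edgeWeight_pos k).le) hω (by positivity) hN
    (hs.s_nonneg F.edgeWeight_pos hω hs₀ hs₁) hend

end MarkovFamily

end MarkovFamily

section ChebyshevFamilies

lemma derivative_smul_T_succ (k : ℕ) :
    derivative ((1 / (2 * ((k : ℝ) + 1))) • T ℝ (k + 1)) = (1 / 2 : ℝ) • U ℝ k := by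
  have derivative_T : derivative (T ℝ (k + 1)) = ((k : ℝ) + 1) • U ℝ k := by
    rw [T_derivative_eq_U, add_sub_cancel_right, smul_eq_C_mul]
    simp
  rw [derivative_smul, derivative_T, smul_smul]
  congr 1
  field_simp

lemma derivative_U_add_two_sub (k : ℕ) :
    derivative (U ℝ (k + 2)) - derivative (U ℝ k) = (2 * ((k : ℝ) + 2)) • U ℝ (k + 1) := by
  rw [← derivative_sub, ← two_mul_T_eq_U_sub_U, derivative_mul, T_derivative_eq_U, smul_eq_C_mul,
    show (k : ℤ) + 2 - 1 = k + 1 by ring]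
  simp [mul_assoc, map_ofNat]

/-- The family of the Chebyshev polynomials of the first kind, for the weight `w_0`. -/
noncomputable def chebyshevTFamily : MarkovFamily 0 where
  poly := chebyshevTsequence ℝ
  κ := Real.pi / 2
  γ j := if j = 0 then 2 else 1
  β k := 1 / (2 * (k + 1))
  δ j := if j = 0 then 1 / 2 else 1
  κ_pos := by positivity
  γ_pos _ := by split_ifs <;> norm_num
  β_pos _ := by positivity
  δ_pos _ := by split_ifs <;> norm_num
  poly_zero := T_zero ℝ
  normSq_sum s c := by
    refine (normSq_zero_sum_T s c).trans ?_
    rw [mul_sum]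
    refine sum_congr rfl fun i _ => ?_
    split_ifs <;> ring
  derivative_recurrence j := by
    change derivative ((1 / (2 * ((j : ℝ) + 1))) • T ℝ (j + 1)) - _ = _
    rw [derivative_smul_T_succ]
    rcases j with _ | _ | j
    · simp [chebyshevTsequence]
    · simp [chebyshevTsequence, U_one, ← map_ofNat (C : ℝ →+* ℝ[X]), ← smul_eq_C_mul, smul_smul]
    · have two_smul_T : (2 : ℝ) • T ℝ (j + 2) = U ℝ (j + 2) - U ℝ j := by
        rw [← two_mul_T_eq_U_sub_U, smul_eq_C_mul, map_ofNat]
      change _ - derivative ((1 / (2 * ((j : ℝ) + 1))) • T ℝ (j + 1)) = (1 : ℝ) • T ℝ (j + 2)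
      rw [derivative_smul_T_succ, ← smul_sub, show ((j + 1 + 1 : ℕ) : ℤ) = j + 2 by omega,
        ← two_smul_T, smul_smul]
      norm_num

/-- The family of the Chebyshev polynomials of the second kind, for the weight `w_1`. -/
noncomputable def chebyshevUFamily : MarkovFamily 1 where
  poly := ⟨fun j => U ℝ j, degree_U_natCast ℝ⟩
  κ := Real.pi / 2
  γ _ := 1
  β _ := 1
  δ j := 2 * (j + 1)
  κ_pos := by positivity
  γ_pos _ := one_pos
  β_pos _ := one_pos
  δ_pos _ := by positivity
  poly_zero := U_zero ℝ
  normSq_sum s c := by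
    refine (normSq_one_sum_U s c).trans ?_
    simp only [mul_sum, one_mul]
  derivative_recurrence j := by
    rcases j with _ | j
    · simp [smul_eq_C_mul, map_ofNat]
    · simpa [add_assoc, one_add_one_eq_two] using derivative_U_add_two_sub j

lemma edgeWeight_chebyshevTFamily (k : ℕ) :
    chebyshevTFamily.edgeWeight k = 1 / (4 * (k + 1) ^ 2) := by
  simp only [MarkovFamily.edgeWeight, chebyshevTFamily]
  rw [if_neg k.succ_ne_zero]
  field_simp
  norm_num

lemma vertexWeight_chebyshevTFamily (j : ℕ) :
    chebyshevTFamily.vertexWeight j = if j = 0 then 1 / 2 else 1 := by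
  simp only [MarkovFamily.vertexWeight, chebyshevTFamily]
  split_ifs <;> norm_num

lemma edgeWeight_chebyshevUFamily (k : ℕ) : chebyshevUFamily.edgeWeight k = 1 := by
  simp [MarkovFamily.edgeWeight, chebyshevUFamily]

lemma vertexWeight_chebyshevUFamily (j : ℕ) :
    chebyshevUFamily.vertexWeight j = 4 * (j + 1) ^ 2 := by
  simp only [MarkovFamily.vertexWeight, chebyshevUFamily]
  ring

lemma isSeriesSolution_tSeries :
    IsSeriesSolution chebyshevTFamily.edgeWeight chebyshevTFamily.vertexWeight
      (fun i j => tSeries i j) (fun i k => tFlux i k) where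
  s_zero _ := rfl
  f_zero i := by simpa only [Nat.cast_zero] using tFlux_zero i
  f_succ i k := by
    have h := tSeries_difference i (k + 1)
    rw [add_sub_cancel_right, add_assoc, one_add_one_eq_two] at h
    simp only [Nat.cast_add, Nat.cast_one, Nat.cast_ofNat, edgeWeight_chebyshevTFamily, h]
    field_simp
  f_sub i j := by
    rw [vertexWeight_chebyshevTFamily]
    rcases j with _ | j
    · have h := tFlux_difference i 0
      rw [zero_sub, tFlux_neg, zero_add] at h
      simp only [zero_add, zero_tsub, Nat.cast_zero, Nat.cast_one, if_true, tFlux_zero]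
      linear_combination h / 2
    · simpa using tFlux_difference i (j + 1)

lemma isSeriesSolution_uSeries :
    IsSeriesSolution chebyshevUFamily.edgeWeight chebyshevUFamily.vertexWeight
      (fun i j => uSeries i (j + 1)) (fun i k => uSeries (i + 1) (k + 2) - uSeries (i + 1) k) where
  s_zero _ := rfl
  f_zero i := by simp [uSeries_succ_two]
  f_succ i k := by
    push_cast
    rw [edgeWeight_chebyshevUFamily, one_mul, add_right_comm]
  f_sub i j := by
    rw [vertexWeight_chebyshevUFamily]
    have h := uSeries_second_difference i (j + 1)
    rcases j with _ | j
    · norm_num [uSeries_neg, uSeries_succ_two] at h ⊢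
      linarith
    · norm_num [add_sub_assoc, add_assoc] at h ⊢
      linarith

end ChebyshevFamilies


section ClosedForms

lemma tSeries_zero (x : ℝ) : tSeries 0 x = 1 := rfl

lemma tSeries_one (x : ℝ) : tSeries 1 x = (x ^ 2 - 1) ^ 2 / 4 := by
  norm_num [tSeries, tShift, pow_succ, centralFactorial]
  ring

lemma tSeries_two (x : ℝ) :
    tSeries 2 x = (x ^ 2 - 1) ^ 2 * (9 * x ^ 4 - 146 * x ^ 2 + 585) / 1440 := by
  norm_num [tSeries, tShift, pow_succ, centralFactorial]
  ring

lemma tSeries_three (x : ℝ) :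
    tSeries 3 x = (x ^ 2 - 1) ^ 2 *
      (35 * x ^ 8 - 2188 * x ^ 6 + 46994 * x ^ 4 - 400908 * x ^ 2 + 1167075) / 604800 := by
  norm_num [tSeries, tShift, pow_succ, centralFactorial]
  ring

lemma tSeries_four (x : ℝ) :
    tSeries 4 x = (x ^ 2 - 1) ^ 2 *
      (24255 * x ^ 12 - 3755898 * x ^ 10 + 223639985 * x ^ 8 - 6466474732 * x ^ 6 +
        94640266289 * x ^ 4 - 656474739066 * x ^ 2 + 1698061139775) / 87178291200 := by
  norm_num [tSeries, tShift, pow_succ, centralFactorial]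
  ring

lemma uSeries_zero (x : ℝ) : uSeries 0 x = 1 := rfl

lemma uSeries_one (x : ℝ) : uSeries 1 x = (x ^ 2 - 1) * (x ^ 2 - 3) / 12 := by
  norm_num [uSeries, uShift, pow_succ, centralFactorial]
  ring

lemma uSeries_two (x : ℝ) :
    uSeries 2 x = (x ^ 2 - 1) * (15 * x ^ 6 - 377 * x ^ 4 + 2633 * x ^ 2 - 4095) / 10080 := by
  norm_num [uSeries, uShift, pow_succ, centralFactorial]
  ring

lemma uSeries_three (x : ℝ) :
    uSeries 3 x = (x ^ 2 - 1) *
      (225 * x ^ 10 - 18299 * x ^ 8 + 525046 * x ^ 6 - 6387266 * x ^ 4 + 31099689 * x ^ 2 -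
        38513475) / 19958400 := by
  norm_num [uSeries, uShift, pow_succ, centralFactorial]
  ring

lemma uSeries_four (x : ℝ) :
    uSeries 4 x = (x ^ 2 - 1) *
      (4095 * x ^ 14 - 768081 * x ^ 12 + 56107283 * x ^ 10 - 2032363101 * x ^ 8 +
        38515935261 * x ^ 6 - 368141849363 * x ^ 4 + 1538810329041 * x ^ 2 - 1698061139775) /
        87178291200 := by
  norm_num [uSeries, uShift, pow_succ, centralFactorial]
  ring

end ClosedForms

section Bounds

/- Multiplying the partial sum by a power of `1 / μ` gives a polynomial in the degree and the node.
In terms of the amounts by which these exceed their least admissible values, all its coefficients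
have the same sign; this is what each final `ring_nf; positivity` below verifies. -/

variable {n : ℕ}

lemma tSeries_apply_zero_nonneg {i : ℕ} (hi : i ≤ 4) : 0 ≤ tSeries i 0 := by
  interval_cases i <;>
    norm_num [tSeries_zero, tSeries_one, tSeries_two, tSeries_three, tSeries_four]

lemma tSeries_apply_one_nonneg {i : ℕ} (hi : i ≤ 4) : 0 ≤ tSeries i 1 := by
  interval_cases i <;>
    norm_num [tSeries_zero, tSeries_one, tSeries_two, tSeries_three, tSeries_four]

lemma uSeries_apply_one_nonneg {i : ℕ} (hi : i ≤ 4) : 0 ≤ uSeries i 1 := by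
  interval_cases i <;>
    norm_num [uSeries_zero, uSeries_one, uSeries_two, uSeries_three, uSeries_four]

lemma uSeries_apply_two_nonneg {i : ℕ} (hi : i ≤ 4) : 0 ≤ uSeries i 2 := by
  interval_cases i <;>
    norm_num [uSeries_zero, uSeries_one, uSeries_two, uSeries_three, uSeries_four]

lemma truncatedSeries_tSeries_pos (hn : 1 ≤ n) {j : ℕ} (hj : j < n + 2) :
    0 < truncatedSeries ((0.472871 * ((n : ℝ) + 2) ^ 2) ^ 2)⁻¹ (fun i j => tSeries i j) 3 j := by
  rw [truncatedSeries_inv (by positivity)]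
  refine div_pos ?_ (by positivity)
  simp only [sum_range_succ, range_zero, sum_empty, tSeries_zero, tSeries_one, tSeries_two,
    tSeries_three]
  rcases j with _ | i
  · obtain ⟨d, rfl⟩ := Nat.exists_eq_add_of_le hn
    push_cast
    norm_num only
    ring_nf
    positivity
  · obtain ⟨d, rfl⟩ := Nat.exists_eq_add_of_le (show i ≤ n by omega)
    push_cast
    norm_num only
    ring_nf
    positivity

lemma truncatedSeries_uSeries_pos {j : ℕ} (hj : j < n + 2) :
    0 < truncatedSeries ((0.250987 * ((n : ℝ) + 4) ^ 2) ^ 2)⁻¹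
      (fun i j => uSeries i (j + 1)) 3 j := by
  rw [truncatedSeries_inv (by positivity)]
  refine div_pos ?_ (by positivity)
  simp only [sum_range_succ, range_zero, sum_empty, uSeries_zero, uSeries_one, uSeries_two,
    uSeries_three]
  obtain ⟨d, hd⟩ := Nat.exists_eq_add_of_le (show j ≤ n + 1 by omega)
  have n_add_four : (n : ℝ) + 4 = j + d + 3 := by
    have : (n : ℝ) + 1 = j + d := mod_cast hd
    linarith
  rw [n_add_four]
  norm_num only
  ring_nf
  positivity

theorem markovInequality_zero (hn : 1 ≤ n) :
    MarkovInequality 0 n (0.472871 * ((n : ℝ) + 2) ^ 2) := by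
  refine chebyshevTFamily.markovInequality_of_isSeriesSolution isSeriesSolution_tSeries
    (by decide : Odd 3) (fun i hi => ?_) (fun i hi => ?_) (by positivity)
    fun j => truncatedSeries_tSeries_pos hn
  · exact_mod_cast tSeries_apply_zero_nonneg (by omega)
  · exact_mod_cast tSeries_apply_one_nonneg (by omega)

theorem markovInequality_one (n : ℕ) :
    MarkovInequality 1 n (0.250987 * ((n : ℝ) + 4) ^ 2) := by
  refine chebyshevUFamily.markovInequality_of_isSeriesSolution isSeriesSolution_uSeries
    (by decide : Odd 3) (fun i hi => ?_) (fun i hi => ?_) (by positivity)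
    fun j => truncatedSeries_uSeries_pos
  · simpa using uSeries_apply_one_nonneg (by omega)
  · simpa [one_add_one_eq_two] using uSeries_apply_two_nonneg (by omega)

lemma one_sub_quartic_pos (μ : ℝ) :
    0 < 1 - μ / 4 + 13 / 32 * μ ^ 2 - 247 / 128 * μ ^ 3 + 39891 / 2048 * μ ^ 4 := by
  nlinarith [sq_nonneg (1 - μ / 8), sq_nonneg (μ * (1 - 5 * μ)), sq_nonneg (μ ^ 2), sq_nonneg μ]

lemma truncatedSeries_tSeries_zero_pos (μ : ℝ) :
    0 < truncatedSeries μ (fun i j => tSeries i j) 4 0 := by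
  refine (one_sub_quartic_pos μ).trans_eq ?_
  norm_num [truncatedSeries, sum_range_succ, tSeries_zero, tSeries_one, tSeries_two, tSeries_three,
    tSeries_four]
  ring

lemma truncatedSeries_tSeries_one_pos (μ : ℝ) :
    0 < truncatedSeries μ (fun i j => tSeries i j) 4 1 := by
  norm_num [truncatedSeries, sum_range_succ, tSeries_zero, tSeries_one, tSeries_two, tSeries_three,
    tSeries_four]

lemma truncatedSeries_uSeries_zero_pos (μ : ℝ) :
    0 < truncatedSeries μ (fun i j => uSeries i (j + 1)) 4 0 := by
  norm_num [truncatedSeries, sum_range_succ, uSeries_zero, uSeries_one, uSeries_two, uSeries_three,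
    uSeries_four]

lemma truncatedSeries_uSeries_one_pos (μ : ℝ) :
    0 < truncatedSeries μ (fun i j => uSeries i (j + 1)) 4 1 := by
  refine (one_sub_quartic_pos μ).trans_eq ?_
  norm_num [truncatedSeries, sum_range_succ, uSeries_zero, uSeries_one, uSeries_two, uSeries_three,
    uSeries_four]
  ring

lemma truncatedSeries_tSeries_succ_nonpos (hn : 2 ≤ n) :
    truncatedSeries ((0.472135 * (n : ℝ) ^ 2) ^ 2)⁻¹ (fun i j => tSeries i j) 4 (n + 1) ≤ 0 := by
  rw [truncatedSeries_inv (by positivity)]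
  refine div_nonpos_of_nonpos_of_nonneg (neg_nonneg.1 ?_) (by positivity)
  simp only [sum_range_succ, range_zero, sum_empty, tSeries_zero, tSeries_one, tSeries_two,
    tSeries_three, tSeries_four]
  obtain ⟨d, rfl⟩ := Nat.exists_eq_add_of_le hn
  push_cast
  norm_num only
  ring_nf
  positivity

lemma truncatedSeries_uSeries_succ_nonpos (hn : 3 ≤ n) :
    truncatedSeries ((0.248549 * (n : ℝ) ^ 2) ^ 2)⁻¹
      (fun i j => uSeries i (j + 1)) 4 (n + 1) ≤ 0 := by
  rw [truncatedSeries_inv (by positivity)]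
  refine div_nonpos_of_nonpos_of_nonneg (neg_nonneg.1 ?_) (by positivity)
  simp only [sum_range_succ, range_zero, sum_empty, uSeries_zero, uSeries_one, uSeries_two,
    uSeries_three, uSeries_four]
  obtain ⟨d, rfl⟩ := Nat.exists_eq_add_of_le hn
  push_cast
  norm_num only
  ring_nf
  positivity

theorem mul_sq_le_markovConst_zero (hn : 1 ≤ n) :
    0.472135 * (n : ℝ) ^ 2 ≤ markovConst 0 n := by
  rcases hn.eq_or_lt with rfl | hn₂
  · refine chebyshevTFamily.le_markovConst_of_vertexWeight_zero (markovInequality_zero hn)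
      (by positivity) (by positivity) one_ne_zero ?_
    norm_num [edgeWeight_chebyshevTFamily, vertexWeight_chebyshevTFamily]
  refine chebyshevTFamily.le_markovConst_of_isSeriesSolution isSeriesSolution_tSeries
    (by decide : Even 4) (fun i hi => ?_) (fun i hi => ?_) (markovInequality_zero hn)
    (by positivity) (by positivity) (by omega) (truncatedSeries_tSeries_zero_pos _)
    (truncatedSeries_tSeries_one_pos _) (truncatedSeries_tSeries_succ_nonpos hn₂)
  · exact_mod_cast tSeries_apply_zero_nonneg hi
  · exact_mod_cast tSeries_apply_one_nonneg hi

theorem mul_sq_le_markovConst_one (hn : 1 ≤ n) :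
    0.248549 * (n : ℝ) ^ 2 ≤ markovConst 1 n := by
  rcases le_or_gt n 2 with hn₂ | hn₂
  · refine chebyshevUFamily.le_markovConst_of_vertexWeight_zero (markovInequality_one n)
      (by positivity) (by positivity) (by omega) ?_
    interval_cases n <;> norm_num [edgeWeight_chebyshevUFamily, vertexWeight_chebyshevUFamily]
  refine chebyshevUFamily.le_markovConst_of_isSeriesSolution isSeriesSolution_uSeries
    (by decide : Even 4) (fun i hi => ?_) (fun i hi => ?_) (markovInequality_one n)
    (by positivity) (by positivity) (by omega) (truncatedSeries_uSeries_zero_pos _)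
    (truncatedSeries_uSeries_one_pos _) (truncatedSeries_uSeries_succ_nonpos hn₂)
  · simpa using uSeries_apply_one_nonneg hi
  · simpa [one_add_one_eq_two] using uSeries_apply_two_nonneg hi

end Bounds

end MarkovChebyshev

theorem markov_chebyshev_bounds (n : ℕ) (hn : 1 ≤ n) :
    0.472135 * (n : ℝ)^2 ≤ markovConst 0 n ∧
    markovConst 0 n ≤ 0.472871 * ((n : ℝ) + 2)^2 ∧
    0.248549 * (n : ℝ)^2 ≤ markovConst 1 n ∧
    markovConst 1 n ≤ 0.250987 * ((n : ℝ) + 4)^2 := by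
  open MarkovChebyshev in
  exact ⟨mul_sq_le_markovConst_zero hn, (markovInequality_zero hn).markovConst_le (by positivity),
    mul_sq_le_markovConst_one hn, (markovInequality_one n).markovConst_le (by positivity)⟩
end

section
/- Let λ be a real number with λ ≥ 7 and let n be a natural number with n ≥ 3. Then the best Markov constant c_n(λ) satisfies (1/16)·n(n+2λ)³/λ² ≤ (c_n(λ))² ≤ n(n+2λ)³/λ². -/
open Polynomial Filter

/-!
Write `I_λ(q)` for the integral of `q` against `w_λ`, so that `w_{λ+1} = (1 - x ^ 2) w_λ`.

Upper bound: the Gegenbauer operator satisfies `I_λ(L p · q) = I_{λ+1}(p' q')` and has eigenvalue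
`n (n + 2 λ)` in degree `n`, which gives `I_{λ+1}(p' ^ 2) ≤ n (n + 2 λ) I_λ(p ^ 2)`. It remains to
pass from `I_{λ+1}` to `I_λ` on the left. Expanding `0 ≤ I_{λ+1}((x q' - θ q) ^ 2)` and integrating
by parts yields a Hardy-type inequality, which for the right `θ` and `q = p'` costs the factor
`(n + 2 λ) ^ 2 / λ ^ 2`.

Lower bound: the trial polynomial is the Gegenbauer polynomial of the shifted parameter `λ + 1`.
Integrating by parts against `w_λ` and `w_{λ+1}` and eliminating the mixed terms computes its Markov
quotient exactly.
-/

lemma exists_natDegree_sub_C_mul_le {K : Type*} [Field K] {n : ℕ} {p P : K[X]}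
    (hp : p.natDegree ≤ n + 1) (hP : P.natDegree = n + 1) :
    ∃ c, (p - C c * P).natDegree ≤ n := by
  have hP0 : P.coeff (n + 1) ≠ 0 := by
    rw [← hP, coeff_natDegree, leadingCoeff_ne_zero]
    rintro rfl
    simp at hP
  refine ⟨p.coeff (n + 1) / P.coeff (n + 1), natDegree_le_iff_coeff_eq_zero.mpr fun k hk => ?_⟩
  rw [coeff_sub, coeff_C_mul]
  obtain rfl | hk : k = n + 1 ∨ n + 1 < k := by omega
  · rw [div_mul_cancel₀ _ hP0, sub_self]
  · rw [coeff_eq_zero_of_natDegree_lt (hp.trans_lt hk),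
      coeff_eq_zero_of_natDegree_lt (hP.trans_lt hk), mul_zero, sub_zero]

section Weight

lemma one_sub_sq_nonneg {x : ℝ} (hx : x ∈ Set.Icc (-1 : ℝ) 1) : 0 ≤ 1 - x ^ 2 := by
  nlinarith [hx.1, hx.2]

lemma one_sub_sq_pos {x : ℝ} (hx : x ∈ Set.Ioo (-1 : ℝ) 1) : 0 < 1 - x ^ 2 := by
  nlinarith [hx.1, hx.2]

lemma intervalIntegrable_one_sub_sq_rpow {s : ℝ} (hs : -1 < s) :
    IntervalIntegrable (fun x : ℝ => (1 - x ^ 2) ^ s) MeasureTheory.volume (-1) 1 := by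
  have right_half :
      IntervalIntegrable (fun x : ℝ => (1 - x ^ 2) ^ s) MeasureTheory.volume 0 1 := by
    have singular : IntervalIntegrable (fun x : ℝ => (1 - x) ^ s) MeasureTheory.volume 0 1 := by
      simpa using ((intervalIntegral.intervalIntegrable_rpow' (a := 0) (b := 1) hs).comp_sub_left
        1).symm
    have regular : ContinuousOn (fun x : ℝ => (1 + x) ^ s) (Set.uIcc 0 1) := by
      refine ContinuousOn.rpow_const (by fun_prop) fun x hx => Or.inl ?_
      rw [Set.uIcc_of_le zero_le_one] at hx
      linarith [hx.1]
    refine (singular.mul_continuousOn regular).congr fun x hx => ?_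
    rw [Set.uIoc_of_le zero_le_one] at hx
    rw [← Real.mul_rpow (by linarith [hx.2]) (by linarith [hx.1])]
    ring_nf
  have left_half :
      IntervalIntegrable (fun x : ℝ => (1 - x ^ 2) ^ s) MeasureTheory.volume (-1) 0 := by
    rw [IntervalIntegrable.iff_comp_neg]
    simpa using right_half.symm
  exact left_half.trans right_half

end Weight

/-- The integral `∫ q(x) (1 - x ^ 2) ^ (lam - 1/2) dx` over `[-1, 1]` of a polynomial against the
Gegenbauer weight; `gegIntegral lam (p ^ 2)` is the squared norm `(gegNorm lam p) ^ 2`. -/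
noncomputable def gegIntegral (lam : ℝ) (q : ℝ[X]) : ℝ :=
  ∫ x in (-1 : ℝ)..1, q.eval x * (1 - x ^ 2) ^ (lam - 1 / 2)

section GegIntegral

variable {lam : ℝ}

lemma intervalIntegrable_eval_mul_gegWeight (hlam : -1 / 2 < lam) (q : ℝ[X]) :
    IntervalIntegrable (fun x : ℝ => q.eval x * (1 - x ^ 2) ^ (lam - 1 / 2))
      MeasureTheory.volume (-1) 1 :=
  (intervalIntegrable_one_sub_sq_rpow (by linarith)).continuousOn_mul q.continuousOn

@[simp]
lemma gegIntegral_zero : gegIntegral lam 0 = 0 := by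
  simp [gegIntegral]

lemma gegIntegral_add (hlam : -1 / 2 < lam) (p q : ℝ[X]) :
    gegIntegral lam (p + q) = gegIntegral lam p + gegIntegral lam q := by
  simp only [gegIntegral, eval_add, add_mul]
  exact intervalIntegral.integral_add (intervalIntegrable_eval_mul_gegWeight hlam p)
    (intervalIntegrable_eval_mul_gegWeight hlam q)

lemma gegIntegral_sub (hlam : -1 / 2 < lam) (p q : ℝ[X]) :
    gegIntegral lam (p - q) = gegIntegral lam p - gegIntegral lam q := by
  simp only [gegIntegral, eval_sub, sub_mul]
  exact intervalIntegral.integral_sub (intervalIntegrable_eval_mul_gegWeight hlam p)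
    (intervalIntegrable_eval_mul_gegWeight hlam q)

lemma gegIntegral_C_mul (c : ℝ) (q : ℝ[X]) :
    gegIntegral lam (C c * q) = c * gegIntegral lam q := by
  simp only [gegIntegral, eval_mul, eval_C, mul_assoc, intervalIntegral.integral_const_mul]

lemma gegIntegral_C_mul_add_sq (hlam : -1 / 2 < lam) (c : ℝ) (p q : ℝ[X]) :
    gegIntegral lam ((C c * p + q) ^ 2) = c ^ 2 * gegIntegral lam (p ^ 2) +
      2 * c * gegIntegral lam (p * q) + gegIntegral lam (q ^ 2) := by
  have expand : (C c * p + q) ^ 2 = C (c ^ 2) * p ^ 2 + C (2 * c) * (p * q) + q ^ 2 := by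
    simp only [C_mul, C_pow, C_ofNat]
    ring
  simp only [expand, gegIntegral_add hlam, gegIntegral_C_mul]

lemma gegIntegral_sq_nonneg (q : ℝ[X]) : 0 ≤ gegIntegral lam (q ^ 2) := by
  refine intervalIntegral.integral_nonneg (by norm_num) fun x hx => ?_
  rw [eval_pow]
  exact mul_nonneg (sq_nonneg _) (Real.rpow_nonneg (one_sub_sq_nonneg hx) _)

lemma gegIntegral_add_one (hlam : -1 / 2 < lam) (q : ℝ[X]) :
    gegIntegral (lam + 1) q = gegIntegral lam ((1 - X ^ 2) * q) := by
  refine intervalIntegral.integral_congr fun x hx => ?_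
  rw [Set.uIcc_of_le (by norm_num)] at hx
  have weight : (1 - x ^ 2) ^ (lam + 1 - 1 / 2) = (1 - x ^ 2) ^ (lam - 1 / 2) * (1 - x ^ 2) := by
    rw [← Real.rpow_add_one' (one_sub_sq_nonneg hx) (by linarith)]
    ring_nf
  simp only [weight, eval_mul, eval_sub, eval_one, eval_pow, eval_X]
  ring

lemma gegIntegral_sq_eq_add (hlam : -1 / 2 < lam) (q : ℝ[X]) :
    gegIntegral lam (q ^ 2) = gegIntegral (lam + 1) (q ^ 2) + gegIntegral lam ((X * q) ^ 2) := by
  rw [gegIntegral_add_one hlam, ← gegIntegral_add hlam]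
  ring_nf

lemma gegIntegral_X_mul_sq_le (hlam : -1 / 2 < lam) (q : ℝ[X]) :
    gegIntegral lam ((X * q) ^ 2) ≤ gegIntegral lam (q ^ 2) := by
  rw [gegIntegral_sq_eq_add hlam q]
  exact le_add_of_nonneg_left (gegIntegral_sq_nonneg q)

lemma gegIntegral_add_one_sq_le (hlam : -1 / 2 < lam) (q : ℝ[X]) :
    gegIntegral (lam + 1) (q ^ 2) ≤ gegIntegral lam (q ^ 2) := by
  rw [gegIntegral_sq_eq_add hlam q]
  exact le_add_of_nonneg_right (gegIntegral_sq_nonneg _)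

lemma gegIntegral_sq_pos (hlam : -1 / 2 < lam) {q : ℝ[X]} (hq : q ≠ 0) :
    0 < gegIntegral lam (q ^ 2) := by
  -- The weight of parameter `lam + 1` is continuous up to the endpoints.
  refine lt_of_lt_of_le ?_ (gegIntegral_add_one_sq_le hlam q)
  obtain ⟨c, hc, hqc⟩ : ∃ c ∈ Set.Ioo (-1 : ℝ) 1, q.eval c ≠ 0 := by
    by_contra! h
    exact hq (q.eq_zero_of_infinite_isRoot ((Set.Ioo_infinite (by norm_num)).mono h))
  have weight_continuous : Continuous fun x : ℝ => (1 - x ^ 2) ^ (lam + 1 - 1 / 2) :=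
    Continuous.rpow_const (by fun_prop) fun _ => Or.inr (by linarith)
  refine intervalIntegral.integral_pos (by norm_num)
    ((q ^ 2).continuous.mul weight_continuous).continuousOn (fun x hx => ?_)
    ⟨c, Set.Ioo_subset_Icc_self hc, ?_⟩
  · rw [eval_pow]
    exact mul_nonneg (sq_nonneg _)
      (Real.rpow_nonneg (one_sub_sq_nonneg (Set.Ioc_subset_Icc_self hx)) _)
  · rw [eval_pow]
    exact mul_pos (by positivity) (Real.rpow_pos_of_pos (one_sub_sq_pos hc) _)

/-- Integrates the Pearson equation `((1 - x ^ 2) w)' = -(2 * lam + 1) x w` of the weight. -/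
lemma gegIntegral_pearson (hlam : -1 / 2 < lam) (f : ℝ[X]) :
    gegIntegral lam ((1 - X ^ 2) * derivative f) =
      (2 * lam + 1) * gegIntegral lam (X * f) := by
  set F : ℝ → ℝ := fun x => f.eval x * (1 - x ^ 2) ^ (lam + 1 / 2)
  have F_continuous : Continuous F :=
    f.continuous.mul (Continuous.rpow_const (by fun_prop) fun _ => Or.inr (by linarith))
  have F_deriv : ∀ x ∈ Set.Ioo (-1 : ℝ) 1, HasDerivAt F
      (((1 - X ^ 2) * derivative f - C (2 * lam + 1) * (X * f)).eval x *
        (1 - x ^ 2) ^ (lam - 1 / 2)) x := by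
    intro x hx
    have base_deriv : HasDerivAt (fun x : ℝ => 1 - x ^ 2) (-(2 * x)) x := by
      simpa using (hasDerivAt_pow 2 x).const_sub 1
    refine ((f.hasDerivAt x).mul
      (base_deriv.rpow_const (Or.inl (one_sub_sq_pos hx).ne'))).congr_deriv ?_
    have weight : (1 - x ^ 2) ^ (lam + 1 / 2) = (1 - x ^ 2) ^ (lam - 1 / 2) * (1 - x ^ 2) := by
      rw [← Real.rpow_add_one (one_sub_sq_pos hx).ne']
      ring_nf
    rw [weight, show lam + 1 / 2 - 1 = lam - 1 / 2 by ring]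
    simp only [eval_mul, eval_sub, eval_one, eval_pow, eval_X, eval_C]
    ring
  have F_boundary : F 1 - F (-1) = 0 := by
    have exponent_ne_zero : lam + 1 / 2 ≠ 0 := by linarith
    simp only [F, one_pow, even_two.neg_one_pow, sub_self, Real.zero_rpow exponent_ne_zero,
      mul_zero]
  rw [← gegIntegral_C_mul, ← sub_eq_zero, ← gegIntegral_sub hlam, ← F_boundary]
  exact intervalIntegral.integral_eq_sub_of_hasDerivAt_of_le (by norm_num)
    F_continuous.continuousOn F_deriv (intervalIntegrable_eval_mul_gegWeight hlam _)

lemma two_lam_add_one_mul_gegIntegral_sq (hlam : -1 / 2 < lam) (q : ℝ[X]) :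
    (2 * lam + 1) * gegIntegral lam (q ^ 2) =
      (2 * lam + 2) * gegIntegral (lam + 1) (q ^ 2) +
        2 * gegIntegral (lam + 1) (X * q * derivative q) := by
  have pearson := gegIntegral_pearson hlam (X * q ^ 2)
  have lhs_expand : (1 - X ^ 2) * derivative (X * q ^ 2) =
      (1 - X ^ 2) * (q ^ 2 + C 2 * (X * q * derivative q)) := by
    simp only [derivative_mul, derivative_X, derivative_pow, Nat.cast_ofNat, C_ofNat]
    ring
  have rhs_expand : X * (X * q ^ 2) = (X * q) ^ 2 := by ring
  rw [lhs_expand, rhs_expand, ← gegIntegral_add_one hlam, gegIntegral_add (by linarith),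
    gegIntegral_C_mul] at pearson
  linear_combination (2 * lam + 1) * gegIntegral_sq_eq_add hlam q - pearson

end GegIntegral

section Operator

/-- The Gegenbauer differential operator `p ↦ (2 * lam + 1) x p' - (1 - x ^ 2) p''`, with the sign
that makes it positive. Its eigenvector of degree `n` is the Gegenbauer polynomial `C_n^(lam)`. -/
noncomputable def gegOp (lam : ℝ) : Module.End ℝ ℝ[X] :=
  LinearMap.mulLeft ℝ (C (2 * lam + 1) * X) ∘ₗ derivative -
    LinearMap.mulLeft ℝ (1 - X ^ 2) ∘ₗ derivative ∘ₗ derivative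

/-- The eigenvalue of `gegOp lam` on the Gegenbauer polynomial of degree `n`. -/
noncomputable def gegEigenvalue (lam : ℝ) (n : ℕ) : ℝ := n * (n + 2 * lam)

variable {lam : ℝ}

lemma gegOp_apply (lam : ℝ) (p : ℝ[X]) : gegOp lam p =
    C (2 * lam + 1) * X * derivative p - (1 - X ^ 2) * derivative (derivative p) := rfl

lemma gegEigenvalue_strictMono (hlam : -1 / 2 < lam) : StrictMono (gegEigenvalue lam) := by
  refine strictMono_nat_of_lt_succ fun n => ?_
  simp only [gegEigenvalue, Nat.cast_add, Nat.cast_one]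
  linarith [n.cast_nonneg (α := ℝ)]

lemma coeff_gegOp (lam : ℝ) (p : ℝ[X]) (k : ℕ) : (gegOp lam p).coeff k =
    gegEigenvalue lam k * p.coeff k - (k + 1) * (k + 2) * p.coeff (k + 2) := by
  have coeff_euler (q : ℝ[X]) : (X * derivative q).coeff k = k * q.coeff k := by
    rcases k with _ | k
    · simp
    · rw [coeff_X_mul, coeff_derivative, Nat.cast_succ, mul_comm]
  -- With the Euler operator `E = x d/dx` the operator reads `E ^ 2 + 2 * lam * E - (d/dx) ^ 2`.
  have expand : gegOp lam p = C (2 * lam) * (X * derivative p) +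
      X * derivative (X * derivative p) - derivative (derivative p) := by
    rw [gegOp_apply, derivative_mul, derivative_X, C_add, C_1]
    ring
  simp only [expand, coeff_sub, coeff_add, coeff_C_mul, coeff_euler, coeff_derivative,
    gegEigenvalue, Nat.cast_add, Nat.cast_one]
  ring

lemma gegOp_mem_degreeLT {n : ℕ} {p : ℝ[X]} (hp : p ∈ degreeLT ℝ n) :
    gegOp lam p ∈ degreeLT ℝ n := by
  rw [mem_degreeLT, degree_lt_iff_coeff_zero] at hp ⊢
  intro k hk
  rw [coeff_gegOp, hp k hk, hp (k + 2) (by omega), mul_zero, mul_zero, sub_zero]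

lemma gegOp_eigenvalue_eq {μ : ℝ} {p : ℝ[X]} (hp : (gegOp lam).HasEigenvector μ p) :
    μ = gegEigenvalue lam p.natDegree := by
  have top_coeff := congrArg (coeff · p.natDegree) hp.apply_eq_smul
  simp only [coeff_gegOp, coeff_smul, smul_eq_mul,
    coeff_eq_zero_of_natDegree_lt (Nat.lt_add_of_pos_right two_pos), mul_zero, sub_zero]
    at top_coeff
  exact (mul_right_cancel₀ (leadingCoeff_ne_zero.mpr hp.2) top_coeff).symm

lemma exists_hasEigenvector_gegOp (hlam : -1 / 2 < lam) (n : ℕ) :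
    ∃ p, p.natDegree = n ∧ (gegOp lam).HasEigenvector (gegEigenvalue lam n) p := by
  set T : Module.End ℝ ℝ[X] := gegOp lam - algebraMap ℝ _ (gegEigenvalue lam n)
  have maps_degreeLT (p : ℝ[X]) (hp : p ∈ degreeLT ℝ (n + 1)) : T p ∈ degreeLT ℝ (n + 1) :=
    sub_mem (gegOp_mem_degreeLT hp) (Submodule.smul_mem _ _ hp)
  -- `T` kills the coefficient of `X ^ n`, so it is not surjective and hence not injective.
  have not_surjective : ¬ Function.Surjective (T.restrict maps_degreeLT) := by
    intro surjective
    obtain ⟨⟨p, hp⟩, hpX⟩ := surjective ⟨X ^ n, mem_degreeLT.mpr (by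
      rw [degree_X_pow]; exact_mod_cast n.lt_succ_self)⟩
    have coeff_eq_one : (T p).coeff n = (X ^ n : ℝ[X]).coeff n :=
      congrArg (fun q : degreeLT ℝ (n + 1) => (q : ℝ[X]).coeff n) hpX
    have coeff_eq_zero : p.coeff (n + 2) = 0 :=
      (degree_lt_iff_coeff_zero _ _).mp (mem_degreeLT.mp hp) _ (Nat.le_succ _)
    simp [T, coeff_gegOp, coeff_eq_zero] at coeff_eq_one
  obtain ⟨⟨p, _⟩, hTp, hp⟩ : ∃ p, T.restrict maps_degreeLT p = 0 ∧ p ≠ 0 := by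
    by_contra! injective
    exact not_surjective (LinearMap.injective_iff_surjective.mp
      ((injective_iff_map_eq_zero _).mpr injective))
  have eigenvector : (gegOp lam).HasEigenvector (gegEigenvalue lam n) p :=
    Module.End.hasEigenvector_iff.mpr ⟨Module.End.mem_eigenspace_iff.mpr
      (sub_eq_zero.mp (congrArg Subtype.val hTp)), fun h => hp (Subtype.ext h)⟩
  exact ⟨p, ((gegEigenvalue_strictMono hlam).injective (gegOp_eigenvalue_eq eigenvector)).symm,
    eigenvector⟩

lemma gegIntegral_gegOp_mul (hlam : -1 / 2 < lam) (p q : ℝ[X]) :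
    gegIntegral lam (gegOp lam p * q) =
      gegIntegral (lam + 1) (derivative p * derivative q) := by
  have expand : gegOp lam p * q = C (2 * lam + 1) * (X * (derivative p * q)) -
      ((1 - X ^ 2) * derivative (derivative p * q) -
        (1 - X ^ 2) * (derivative p * derivative q)) := by
    rw [gegOp_apply, derivative_mul]
    ring
  rw [expand, gegIntegral_sub hlam, gegIntegral_sub hlam, gegIntegral_C_mul,
    gegIntegral_pearson hlam, gegIntegral_add_one hlam]
  ring

lemma gegIntegral_derivative_mul_of_hasEigenvector (hlam : -1 / 2 < lam) {μ : ℝ} {P : ℝ[X]}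
    (hP : (gegOp lam).HasEigenvector μ P) (q : ℝ[X]) :
    gegIntegral (lam + 1) (derivative P * derivative q) = μ * gegIntegral lam (P * q) := by
  rw [← gegIntegral_gegOp_mul hlam, hP.apply_eq_smul, smul_eq_C_mul, mul_assoc,
    gegIntegral_C_mul]

end Operator

section UpperBound

variable {lam : ℝ}

theorem gegIntegral_bernstein (hlam : -1 / 2 < lam) {n : ℕ} {p : ℝ[X]} (hp : p.natDegree ≤ n) :
    gegIntegral (lam + 1) (derivative p ^ 2) ≤
      gegEigenvalue lam n * gegIntegral lam (p ^ 2) := by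
  induction n generalizing p with
  | zero =>
    rw [eq_C_of_natDegree_le_zero hp]
    simp [gegEigenvalue]
  | succ n ih =>
    obtain ⟨P, hPdeg, hP⟩ := exists_hasEigenvector_gegOp hlam (n + 1)
    obtain ⟨c, hr⟩ := exists_natDegree_sub_C_mul_le hp hPdeg
    set r := p - C c * P with hr_def
    have hp_eq : p = C c * P + r := by rw [hr_def]; ring
    have remainder : gegIntegral (lam + 1) (derivative r ^ 2) ≤
        gegEigenvalue lam (n + 1) * gegIntegral lam (r ^ 2) :=
      (ih hr).trans (mul_le_mul_of_nonneg_right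
        (gegEigenvalue_strictMono hlam n.lt_succ_self).le (gegIntegral_sq_nonneg r))
    have square := gegIntegral_derivative_mul_of_hasEigenvector hlam hP P
    have cross := gegIntegral_derivative_mul_of_hasEigenvector hlam hP r
    rw [← sq, ← sq] at square
    rw [hp_eq, derivative_add, derivative_C_mul, gegIntegral_C_mul_add_sq (by linarith),
      gegIntegral_C_mul_add_sq hlam, square, cross]
    linarith

lemma gegIntegral_hardy (hlam : -1 / 2 < lam) (θ : ℝ) {m : ℕ} {q : ℝ[X]}
    (hq : q.natDegree ≤ m) :
    ((2 * lam + 1) * θ - gegEigenvalue lam m) * gegIntegral lam (q ^ 2) ≤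
      (2 * lam + 2 + θ) * θ * gegIntegral (lam + 1) (q ^ 2) := by
  have hlam' : -1 / 2 < lam + 1 := by linarith
  have square_nonneg : 0 ≤ gegIntegral (lam + 1) ((C (-θ) * q + X * derivative q) ^ 2) :=
    gegIntegral_sq_nonneg _
  rw [gegIntegral_C_mul_add_sq hlam', mul_left_comm, ← mul_assoc] at square_nonneg
  have derivative_le := (gegIntegral_X_mul_sq_le hlam' (derivative q)).trans
    (gegIntegral_bernstein hlam hq)
  linear_combination square_nonneg + derivative_le + θ * two_lam_add_one_mul_gegIntegral_sq hlam q

lemma gegIntegral_sq_le_add_one (hlam : 0 < lam) {m : ℕ} {q : ℝ[X]} (hq : q.natDegree ≤ m) :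
    gegIntegral lam (q ^ 2) ≤
      (m + 1 + 2 * lam) ^ 2 / lam ^ 2 * gegIntegral (lam + 1) (q ^ 2) := by
  set A := gegIntegral lam (q ^ 2)
  set B := gegIntegral (lam + 1) (q ^ 2)
  -- The Hardy parameter is chosen so that `θ / lam` is the target constant.
  set θ : ℝ := (m + 1 + 2 * lam) ^ 2 / lam with hθ
  set κ : ℝ := (2 * lam + 1) * θ - gegEigenvalue lam m
  have hB : 0 ≤ B := gegIntegral_sq_nonneg q
  have hθ0 : 0 ≤ θ := by positivity
  have κ_lower : lam * (2 * lam + 2 + θ) ≤ κ := by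
    have θ_mul : θ * lam = (m + 1 + 2 * lam) ^ 2 := by rw [hθ]; field_simp
    have : 0 ≤ ((lam + 1) * θ - gegEigenvalue lam m - lam * (2 * lam + 2)) * lam := by
      rw [gegEigenvalue]
      calc (0 : ℝ) ≤ m ^ 2 + 2 * m * (3 * lam + 1 + lam ^ 2) +
            (lam + 1) * (1 + 4 * lam + 2 * lam ^ 2) := by positivity
        _ = _ := by linear_combination (-(lam + 1)) * θ_mul
    nlinarith [nonneg_of_mul_nonneg_left this hlam]
  have κ_pos : 0 < κ := lt_of_lt_of_le (by positivity) κ_lower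
  refine le_of_mul_le_mul_left ?_ κ_pos
  calc κ * A ≤ (2 * lam + 2 + θ) * θ * B := gegIntegral_hardy (by linarith) θ hq
    _ = lam * (2 * lam + 2 + θ) * (θ / lam * B) := by field_simp
    _ ≤ κ * (θ / lam * B) := by gcongr
    _ = κ * ((m + 1 + 2 * lam) ^ 2 / lam ^ 2 * B) := by rw [hθ, div_div, sq lam]

theorem gegIntegral_markov (hlam : 0 < lam) {n : ℕ} {p : ℝ[X]} (hp : p.natDegree ≤ n) :
    gegIntegral lam (derivative p ^ 2) ≤
      n * (n + 2 * lam) ^ 3 / lam ^ 2 * gegIntegral lam (p ^ 2) := by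
  rcases n with _ | m
  · rw [eq_C_of_natDegree_le_zero hp]
    simp
  · have hp' : (derivative p).natDegree ≤ m :=
      (natDegree_derivative_le p).trans (Nat.sub_le_of_le_add hp)
    calc gegIntegral lam (derivative p ^ 2)
        ≤ (m + 1 + 2 * lam) ^ 2 / lam ^ 2 * gegIntegral (lam + 1) (derivative p ^ 2) :=
          gegIntegral_sq_le_add_one hlam hp'
      _ ≤ (m + 1 + 2 * lam) ^ 2 / lam ^ 2 *
          (gegEigenvalue lam (m + 1) * gegIntegral lam (p ^ 2)) := by
          gcongr
          exact gegIntegral_bernstein (by linarith) hp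
      _ = _ := by
          rw [gegEigenvalue]
          push_cast
          ring

end UpperBound

section GegenbauerPolynomial

lemma gegOp_eigenvector_ode {ν μ : ℝ} {P : ℝ[X]} (hP : (gegOp ν).HasEigenvector μ P) :
    (1 - X ^ 2) * derivative (derivative P) = C (2 * ν + 1) * X * derivative P - C μ * P := by
  rw [← smul_eq_C_mul (p := P), ← hP.apply_eq_smul, gegOp_apply]
  ring

variable {α ν μ : ℝ} {P : ℝ[X]}

lemma gegIntegral_pearson_mul_derivative (hα : -1 / 2 < α)
    (hP : (gegOp ν).HasEigenvector μ P) :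
    gegIntegral α (derivative P ^ 2) - gegIntegral α ((X * derivative P) ^ 2) +
      2 * (ν - α) * gegIntegral α (X * P * derivative P) = μ * gegIntegral α (P ^ 2) := by
  have pearson := gegIntegral_pearson hα (P * derivative P)
  have expand : (1 - X ^ 2) * derivative (P * derivative P) =
      derivative P ^ 2 - (X * derivative P) ^ 2 + C (2 * ν + 1) * (X * P * derivative P) -
        C μ * P ^ 2 := by
    rw [derivative_mul]
    linear_combination P * gegOp_eigenvector_ode hP
  rw [expand, gegIntegral_sub hα, gegIntegral_add hα, gegIntegral_sub hα, gegIntegral_C_mul,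
    gegIntegral_C_mul, ← mul_assoc] at pearson
  linear_combination pearson

lemma gegIntegral_pearson_X_mul_derivative_sq (hα : -1 / 2 < α)
    (hP : (gegOp ν).HasEigenvector μ P) :
    gegIntegral α (derivative P ^ 2) +
      (4 * ν - 2 * α) * gegIntegral α ((X * derivative P) ^ 2) =
        2 * μ * gegIntegral α (X * P * derivative P) := by
  have pearson := gegIntegral_pearson hα (X * derivative P ^ 2)
  have expand : (1 - X ^ 2) * derivative (X * derivative P ^ 2) =
      derivative P ^ 2 + C (4 * ν + 1) * (X * derivative P) ^ 2 -
        C (2 * μ) * (X * P * derivative P) := by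
    have ode := gegOp_eigenvector_ode hP
    simp only [derivative_mul, derivative_X, derivative_pow, Nat.cast_ofNat, C_add, C_mul,
      C_ofNat, C_1] at ode ⊢
    linear_combination 2 * X * derivative P * ode
  have rhs_expand : X * (X * derivative P ^ 2) = (X * derivative P) ^ 2 := by ring
  rw [expand, rhs_expand, gegIntegral_sub hα, gegIntegral_add hα, gegIntegral_C_mul,
    gegIntegral_C_mul] at pearson
  linear_combination pearson

variable {lam : ℝ}

lemma gegIntegral_add_one_derivative_sq_eq (hlam : -1 / 2 < lam)
    (hP : (gegOp (lam + 1)).HasEigenvector μ P) :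
    (2 * lam + 3) * gegIntegral (lam + 1) (derivative P ^ 2) =
      (2 * lam + 1) * μ * gegIntegral lam (P ^ 2) := by
  have hlam' : -1 / 2 < lam + 1 := by linarith
  linear_combination gegIntegral_pearson_X_mul_derivative_sq hlam' hP +
    (2 * lam + 2) * gegIntegral_pearson_mul_derivative hlam' hP -
    μ * two_lam_add_one_mul_gegIntegral_sq hlam P

theorem gegIntegral_derivative_sq_eq (hlam : -1 / 2 < lam)
    (hP : (gegOp (lam + 1)).HasEigenvector μ P) :
    (2 * lam + 3) * (2 * lam + 5) * gegIntegral lam (derivative P ^ 2) =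
      μ * (2 * μ + (2 * lam + 1) * (2 * lam + 4)) * gegIntegral lam (P ^ 2) := by
  linear_combination (2 * lam + 3) * gegIntegral_pearson_X_mul_derivative_sq hlam hP +
    (2 * lam + 3) * μ * gegIntegral_pearson_mul_derivative hlam hP +
    (2 * lam + 4 - μ) * gegIntegral_add_one_derivative_sq_eq hlam hP +
    (2 * lam + 3) * (2 * lam + 4 - μ) * gegIntegral_sq_eq_add hlam (derivative P)

end GegenbauerPolynomial

section MarkovConstant

variable {lam : ℝ} {n : ℕ}

lemma gegNorm_derivative_div_gegNorm (lam : ℝ) (p : ℝ[X]) :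
    gegNorm lam (fun x => (derivative p).eval x) / gegNorm lam (fun x => p.eval x) =
      √(gegIntegral lam (derivative p ^ 2) / gegIntegral lam (p ^ 2)) := by
  rw [Real.sqrt_div (gegIntegral_sq_nonneg _)]
  simp only [gegNorm, gegIntegral, eval_pow, Real.sqrt_eq_rpow]

lemma gegNorm_derivative_div_gegNorm_le (hlam : 0 < lam) {p : ℝ[X]} (hp : p.natDegree ≤ n) :
    gegNorm lam (fun x => (derivative p).eval x) / gegNorm lam (fun x => p.eval x) ≤
      √(n * (n + 2 * lam) ^ 3 / lam ^ 2) := by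
  rw [gegNorm_derivative_div_gegNorm]
  exact Real.sqrt_le_sqrt
    (div_le_of_le_mul₀ (gegIntegral_sq_nonneg _) (by positivity) (gegIntegral_markov hlam hp))

theorem markovConst_sq_le (hlam : 0 < lam) (n : ℕ) :
    markovConst lam n ^ 2 ≤ n * (n + 2 * lam) ^ 3 / lam ^ 2 := by
  have markovConst_nonneg : 0 ≤ markovConst lam n := by
    refine Real.sSup_nonneg ?_
    rintro _ ⟨p, -, -, rfl⟩
    rw [gegNorm_derivative_div_gegNorm]
    positivity
  refine (Real.le_sqrt markovConst_nonneg (by positivity)).mp (Real.sSup_le ?_ (Real.sqrt_nonneg _))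
  rintro _ ⟨p, -, hp, rfl⟩
  exact gegNorm_derivative_div_gegNorm_le hlam hp

lemma gegIntegral_div_le_markovConst_sq (hlam : 0 < lam) {p : ℝ[X]} (hp0 : p ≠ 0)
    (hp : p.natDegree ≤ n) :
    gegIntegral lam (derivative p ^ 2) / gegIntegral lam (p ^ 2) ≤ markovConst lam n ^ 2 := by
  refine (Real.sqrt_le_iff.mp ?_).2
  rw [← gegNorm_derivative_div_gegNorm]
  refine le_csSup ⟨√(n * (n + 2 * lam) ^ 3 / lam ^ 2), ?_⟩ ⟨p, hp0, hp, rfl⟩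
  rintro _ ⟨q, -, hq, rfl⟩
  exact gegNorm_derivative_div_gegNorm_le hlam hq

theorem le_markovConst_sq (hlam : 0 < lam) (n : ℕ) :
    n * (n + 2 * lam + 2) * (2 * (n * (n + 2 * lam + 2)) + (2 * lam + 1) * (2 * lam + 4)) /
      ((2 * lam + 3) * (2 * lam + 5)) ≤ markovConst lam n ^ 2 := by
  have hlam' : -1 / 2 < lam := by linarith
  obtain ⟨P, hPdeg, hP⟩ := exists_hasEigenvector_gegOp (lam := lam + 1) (by linarith) n
  have quotient := gegIntegral_derivative_sq_eq hlam' hP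
  have hμ : gegEigenvalue (lam + 1) n = n * (n + 2 * lam + 2) := by
    rw [gegEigenvalue]
    ring
  rw [hμ] at quotient
  refine le_of_eq_of_le ?_ (gegIntegral_div_le_markovConst_sq hlam hP.2 hPdeg.le)
  rw [div_eq_div_iff (by positivity) (gegIntegral_sq_pos hlam' hP.2).ne']
  linear_combination -quotient

/-- As `x → ∞` the claim reduces to `(2 * lam + 3) * (2 * lam + 5) ≤ 32 * lam ^ 2`, that is, to
`0 ≤ (14 * lam - 15) * (2 * lam + 1)`; this is where `15 / 14` comes from. -/
lemma one_div_sixteen_mul_le_markov_quotient (hlam : 15 / 14 ≤ lam) {x : ℝ} (hx : 0 ≤ x) :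
    1 / 16 * (x * (x + 2 * lam) ^ 3 / lam ^ 2) ≤
      x * (x + 2 * lam + 2) * (2 * (x * (x + 2 * lam + 2)) + (2 * lam + 1) * (2 * lam + 4)) /
        ((2 * lam + 3) * (2 * lam + 5)) := by
  have hlam0 : 0 < lam := by linarith
  rw [← mul_div_assoc, div_le_div_iff₀ (by positivity) (by positivity)]
  obtain ⟨t, ht, rfl⟩ : ∃ t, 0 ≤ t ∧ lam = t + 15 / 14 := ⟨lam - 15 / 14, by linarith, by ring⟩
  rw [← sub_nonneg]
  ring_nf
  positivity

end MarkovConstant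

theorem markov_bounds_lambda_ge_seven_general {lam : ℝ} (hlam : 15 / 14 ≤ lam) (n : ℕ) :
    1/16 * ((n : ℝ) * ((n : ℝ) + 2*lam)^3 / lam^2) ≤ (markovConst lam n)^2 ∧
    (markovConst lam n)^2 ≤ (n : ℝ) * ((n : ℝ) + 2*lam)^3 / lam^2 := by
  have hlam0 : 0 < lam := by linarith
  constructor
  · exact (one_div_sixteen_mul_le_markov_quotient hlam n.cast_nonneg).trans
      (le_markovConst_sq hlam0 n)
  · exact markovConst_sq_le hlam0 n

theorem markov_bounds_lambda_ge_seven (lam : ℝ) (hlam : 7 ≤ lam) (n : ℕ) (hn : 3 ≤ n) :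
    1/16 * ((n : ℝ) * ((n : ℝ) + 2*lam)^3 / lam^2) ≤ (markovConst lam n)^2 ∧
    (markovConst lam n)^2 ≤ (n : ℝ) * ((n : ℝ) + 2*lam)^3 / lam^2 := by
  exact markov_bounds_lambda_ge_seven_general (by linarith) n
end
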